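/- arXiv:2405.01465 — 4 statements merged into one kernel-verified Lean document; each statement's English description precedes it below -/
import Mathlib

section
/- Let p ≥ 1 be an integer, γ > 0, f ∈ C₀^{2p}([0,γ]) with f ≥ 0, let N ≥ 1 be an integer, h = γ/N, x_j = j·h, and let f̄ ∈ ℝ^{N+1} be given by f̄(x_j) = f(x_j). Then there exists a constant C₁ > 0 depending only on p and γ such that for every integer n ≥ 2 and every k ∈ {0,1,…,N}, |f̄^{⊛n}(x_k) − f^{*n}(x_k)| ≤ (1+x_k)^{n−2} · C₁ · C₂(n,x_k) · N^{−2p}. -/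
/-- The `n`-fold continuous convolution of `f` with itself on `[0,∞)`. -/
noncomputable def iterConv (f : ℝ → ℝ) : ℕ → ℝ → ℝ
  | 0 => fun _ => 0
  | 1 => f
  | n + 2 => fun x => ∫ y in (0:ℝ)..x, iterConv f (n + 1) y * f (x - y)

/-- The `h`-scaled discrete linear convolution. -/
def dconv (h : ℝ) (g₁ g₂ : ℕ → ℝ) (k : ℕ) : ℝ :=
  h * ∑ j ∈ Finset.range (k + 1), g₁ j * g₂ (k - j)

/-- The `n`-fold `⊛`-power of a vector. -/
def dpow (h : ℝ) (f : ℕ → ℝ) : ℕ → ℕ → ℝ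
  | 0 => f
  | 1 => f
  | n + 2 => dconv h (dpow h f (n + 1)) f

/-- The constant `C₂(n, x_k)`:
`C₂(n,x_k) = max_{m=2,…,n} max_{j₁+⋯+j_{m−1}=k}
  [ max_{0≤y≤x_{j₁}} |d^{2p}/dy^{2p}( f^{*(n+1−m)}(y)·f(x_{j₁}−y) )|
      · Π_{ℓ=2}^{m−1} f(x_{j_ℓ}) ]`,
with the empty product equal to `1` when `m = 2`. Here `m' = m − 2` ranges over
`0,…,n−2` and tuples `(j₁,…,j_{m−1})` are indexed by `Fin (m'+1)`. -/
noncomputable def C2 (p : ℕ) (f : ℝ → ℝ) (h : ℝ) (n k : ℕ) : ℝ :=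
  ⨆ m' ∈ Finset.range (n - 1),
    ⨆ t ∈ Finset.Nat.antidiagonalTuple (m' + 1) k,
      (⨆ y ∈ Set.Icc (0:ℝ) ((t 0 : ℝ) * h),
          |iteratedDerivWithin (2 * p)
              (fun z => iterConv f (n - 1 - m') z * f ((t 0 : ℝ) * h - z))
              (Set.Icc (0:ℝ) ((t 0 : ℝ) * h)) y|)
        * ∏ i ∈ Finset.univ.filter (fun i : Fin (m' + 1) => i ≠ 0), f ((t i : ℝ) * h)

/-!
Extend `f` to a `2p` times continuously differentiable function on `ℝ` all of whose derivatives of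
order less than `2p` vanish at `0`; the convolution powers inherit both properties. The integrand
`y ↦ f^{*n}(y) f(x - y)` then vanishes to order `2p` at both ends of `[0, x]`, so every boundary
term of the Euler–Maclaurin formula drops out and one quadrature step costs only `O(h^{2p})`.
Convolving once more with `f̄` multiplies the error accumulated so far by at most `x_k`, where `C₂`
absorbs the factor `f(x_{k-j})` because the index tuples in its definition can be extended by
`k - j`; adding the new quadrature error gives the factor `1 + x_k` per step.
-/

section Leibniz

open Function Set Topology MeasureTheory intervalIntegral

variable {E : Type*} [NormedAddCommGroup E] [NormedSpace ℝ E] {φ φ' : ℝ → ℝ → E}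

lemma hasDerivAt_integral_of_continuous_deriv (hφ : Continuous (uncurry φ))
    (hφ' : Continuous (uncurry φ'))
    (hderiv : ∀ x y, HasDerivAt (fun x ↦ φ x y) (φ' x y) x) (a b x₀ : ℝ) :
    HasDerivAt (fun x ↦ ∫ y in a..b, φ x y) (∫ y in a..b, φ' x₀ y) x₀ := by
  obtain ⟨B, hB⟩ := ((isCompact_closedBall x₀ (1 : ℝ)).prod
    (isCompact_uIcc (a := a) (b := b))).exists_bound_of_continuousOn hφ'.continuousOn
  exact (hasDerivAt_integral_of_dominated_loc_of_deriv_le (bound := fun _ ↦ B)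
    (Metric.closedBall_mem_nhds x₀ one_pos)
    (.of_forall fun x ↦ (hφ.uncurry_left x).aestronglyMeasurable)
    ((hφ.uncurry_left x₀).intervalIntegrable _ _) (hφ'.uncurry_left x₀).aestronglyMeasurable
    (.of_forall fun y hy x hx ↦ hB (x, y) ⟨hx, uIoc_subset_uIcc hy⟩)
    intervalIntegrable_const (.of_forall fun y _ x _ ↦ hderiv x y)).2

lemma hasDerivAt_integral_of_continuous_upper [CompleteSpace E]
    (hφ : Continuous (uncurry φ)) (x₀ : ℝ) :
    HasDerivAt (fun x ↦ ∫ y in x₀..x, φ x y) (φ x₀ x₀) x₀ := by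
  rw [hasDerivAt_iff_isLittleO, Asymptotics.isLittleO_iff]
  intro ε hε
  obtain ⟨δ, hδ, hclose⟩ := Metric.continuous_iff.1 hφ (x₀, x₀) ε hε
  filter_upwards [Metric.ball_mem_nhds x₀ hδ] with x hx
  have hmean : (∫ y in x₀..x, φ x y) - (x - x₀) • φ x₀ x₀ = ∫ y in x₀..x, φ x y - φ x₀ x₀ := by
    rw [integral_sub ((hφ.uncurry_left x).intervalIntegrable _ _)
      intervalIntegrable_const, intervalIntegral.integral_const]
  rw [integral_same, sub_zero, hmean, Real.norm_eq_abs (x - x₀)]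
  refine norm_integral_le_of_norm_le_const fun y hy ↦ ?_
  have hy : dist y x₀ < δ :=
    (abs_sub_left_of_mem_uIcc (uIoc_subset_uIcc hy)).trans_lt hx
  rw [← dist_eq_norm]
  exact (hclose (x, y) (max_lt hx hy)).le

lemma hasDerivAt_integral_leibniz [CompleteSpace E] (hφ : Continuous (uncurry φ))
    (hφ' : Continuous (uncurry φ'))
    (hderiv : ∀ x y, HasDerivAt (fun x ↦ φ x y) (φ' x y) x) (a x₀ : ℝ) :
    HasDerivAt (fun x ↦ ∫ y in a..x, φ x y) ((∫ y in a..x₀, φ' x₀ y) + φ x₀ x₀) x₀ := by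
  have hsplit : (fun x ↦ ∫ y in a..x, φ x y) =
      (fun x ↦ ∫ y in a..x₀, φ x y) + fun x ↦ ∫ y in x₀..x, φ x y := by
    funext x
    have hint (c d : ℝ) : IntervalIntegrable (φ x) volume c d :=
      (hφ.uncurry_left x).intervalIntegrable c d
    exact (integral_add_adjacent_intervals (hint _ _) (hint _ _)).symm
  rw [hsplit]
  exact (hasDerivAt_integral_of_continuous_deriv hφ hφ' hderiv a x₀ x₀).add
    (hasDerivAt_integral_of_continuous_upper hφ x₀)

end Leibniz

section Flat

open Set MeasureTheory intervalIntegral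

/-- `f` is `n` times continuously differentiable on `ℝ` and its derivatives of order less than `n`
vanish at `a`. The derivative of order `n` itself is unrestricted. -/
structure IsFlatAt (n : ℕ) (f : ℝ → ℝ) (a : ℝ) : Prop where
  contDiff : ContDiff ℝ n f
  iteratedDeriv_eq_zero : ∀ i < n, iteratedDeriv i f a = 0

namespace IsFlatAt

variable {n : ℕ} {f g : ℝ → ℝ} {a : ℝ}

lemma eq_zero (hf : IsFlatAt n f a) (hn : n ≠ 0) : f a = 0 := by
  simpa using hf.iteratedDeriv_eq_zero 0 (Nat.pos_of_ne_zero hn)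

lemma of_hasDerivAt (hd : ∀ x, HasDerivAt f (g x) x) (hfa : f a = 0) (hg : IsFlatAt n g a) :
    IsFlatAt (n + 1) f a := by
  have hderiv : deriv f = g := funext fun x ↦ (hd x).deriv
  refine ⟨?_, fun i hi ↦ ?_⟩
  · push_cast
    rw [contDiff_succ_iff_deriv, hderiv]
    exact ⟨fun x ↦ (hd x).differentiableAt, by simp, hg.contDiff⟩
  · cases i with
    | zero => simpa using hfa
    | succ i =>
      rw [iteratedDeriv_succ', hderiv]
      exact hg.iteratedDeriv_eq_zero i (by lia)

lemma deriv (hf : IsFlatAt (n + 1) f a) : IsFlatAt n (deriv f) a where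
  contDiff := by
    have := hf.contDiff
    push_cast at this
    exact this.deriv'
  iteratedDeriv_eq_zero i hi := by
    rw [← iteratedDeriv_succ']
    exact hf.iteratedDeriv_eq_zero (i + 1) (by lia)

lemma mul (hf : IsFlatAt n f a) (hg : ContDiff ℝ n g) : IsFlatAt n (fun x ↦ f x * g x) a := by
  refine ⟨hf.contDiff.mul hg, fun i hi ↦ ?_⟩
  have hin : (i : WithTop ℕ∞) ≤ n := by exact_mod_cast hi.le
  rw [iteratedDeriv_fun_mul (hf.contDiff.of_le hin).contDiffAt (hg.of_le hin).contDiffAt]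
  refine Finset.sum_eq_zero fun j hj ↦ ?_
  rw [hf.iteratedDeriv_eq_zero j (by grind)]
  simp

lemma comp_const_sub (hf : IsFlatAt n f a) (x : ℝ) : IsFlatAt n (fun z ↦ f (x - z)) (x - a) where
  contDiff := hf.contDiff.comp (contDiff_const.sub contDiff_id)
  iteratedDeriv_eq_zero i hi := by
    rw [iteratedDeriv_comp_const_sub]
    simp [hf.iteratedDeriv_eq_zero i hi]

end IsFlatAt

/-- Integrating a flat extension of the derivative from `0` produces a flat extension of `f`. -/
lemma exists_isFlatAt_eqOn {γ : ℝ} (hγ : 0 < γ) {n : ℕ} {f : ℝ → ℝ}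
    (hf : ContDiffOn ℝ n f (Icc 0 γ))
    (hv : ∀ k < n, iteratedDerivWithin k f (Icc 0 γ) 0 = 0) :
    ∃ g, IsFlatAt n g 0 ∧ EqOn f g (Icc 0 γ) := by
  induction n generalizing f with
  | zero =>
    refine ⟨IccExtend hγ.le ((Icc 0 γ).domRestrict f), ⟨?_, by simp⟩, fun x hx ↦ ?_⟩
    · exact contDiff_zero.2
        (continuousOn_iff_continuous_domRestrict.1 hf.continuousOn).Icc_extend'
    · rw [IccExtend_of_mem _ _ hx, domRestrict_apply]
  | succ n ih =>
    push_cast at hf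
    obtain ⟨hdiff, -, hf'⟩ := (contDiffOn_succ_iff_derivWithin (uniqueDiffOn_Icc hγ)).1 hf
    obtain ⟨g, hg, hfg⟩ := ih hf' fun k hk ↦ by
      rw [← iteratedDerivWithin_succ']
      exact hv (k + 1) (by lia)
    have hgc : Continuous g := hg.contDiff.continuous
    refine ⟨fun x ↦ ∫ y in 0..x, g y, .of_hasDerivAt (fun x ↦
      (hgc.integral_hasStrictDerivAt 0 x).hasDerivAt) integral_same hg, fun x hx ↦ ?_⟩
    have hderiv : ∀ y ∈ Ioo 0 x, HasDerivAt f (g y) y := fun y hy ↦ by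
      have hyγ : y ∈ Icc 0 γ := ⟨hy.1.le, hy.2.le.trans hx.2⟩
      rw [← hfg hyγ]
      exact (hdiff y hyγ).hasDerivWithinAt.hasDerivAt (Icc_mem_nhds hy.1 (hy.2.trans_le hx.2))
    have hf0 : f 0 = 0 := by simpa using hv 0 (by lia)
    calc f x = f x - f 0 := by rw [hf0, sub_zero]
      _ = ∫ y in 0..x, g y := (integral_eq_sub_of_hasDerivAt_of_le hx.1
        (hdiff.continuousOn.mono (Icc_subset_Icc_right hx.2)) hderiv
        (hgc.intervalIntegrable _ _)).symm

/-- The convolution of `F` and `f` over `[0, x]`, whose iterates are `iterConv`. -/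
noncomputable def volterraConv (F f : ℝ → ℝ) (x : ℝ) : ℝ :=
  ∫ y in 0..x, F y * f (x - y)

lemma isFlatAt_volterraConv {F f : ℝ → ℝ} {n : ℕ} (hF : Continuous F) (hf : IsFlatAt n f 0) :
    IsFlatAt n (volterraConv F f) 0 := by
  induction n generalizing f with
  | zero =>
    have hfc := hf.contDiff.continuous
    refine ⟨contDiff_zero.2 ?_, by simp⟩
    exact continuous_parametric_intervalIntegral_of_continuous
      (f := fun x y ↦ F y * f (x - y)) (by fun_prop) continuous_id
  | succ n ih =>
    have hfc := hf.contDiff.continuous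
    have hfc' := hf.deriv.contDiff.continuous
    have hdiff : Differentiable ℝ f := hf.contDiff.differentiable (by simp)
    refine .of_hasDerivAt (fun x ↦ ?_) integral_same (ih hf.deriv)
    have hleibniz := hasDerivAt_integral_leibniz (φ := fun x y ↦ F y * f (x - y))
      (φ' := fun x y ↦ F y * deriv f (x - y)) (by fun_prop) (by fun_prop)
      (fun x y ↦ ((hdiff (x - y)).hasDerivAt.comp_sub_const x y).const_mul (F y)) 0 x
    rwa [sub_self, hf.eq_zero n.succ_ne_zero, mul_zero, add_zero] at hleibniz

lemma isFlatAt_iterConv {f : ℝ → ℝ} {n : ℕ} (hf : IsFlatAt n f 0) (m : ℕ) :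
    IsFlatAt n (iterConv f (m + 1)) 0 := by
  induction m with
  | zero => exact hf
  | succ m ih => exact isFlatAt_volterraConv ih.contDiff.continuous hf

lemma volterraConv_congr {F G f g : ℝ → ℝ} {x : ℝ} (hx : 0 ≤ x) (hFG : EqOn F G (Icc 0 x))
    (hfg : EqOn f g (Icc 0 x)) : volterraConv F f x = volterraConv G g x :=
  integral_congr fun y hy ↦ by
    rw [uIcc_of_le hx] at hy
    exact congr_arg₂ (· * ·) (hFG hy) (hfg ⟨sub_nonneg.2 hy.2, sub_le_self x hy.1⟩)

lemma iterConv_eqOn {f g : ℝ → ℝ} {γ : ℝ} (hfg : EqOn f g (Icc 0 γ)) (m : ℕ) :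
    EqOn (iterConv f (m + 1)) (iterConv g (m + 1)) (Icc 0 γ) := by
  induction m with
  | zero => exact hfg
  | succ m ih =>
    intro x hx
    have hsub : Icc 0 x ⊆ Icc 0 γ := Icc_subset_Icc_right hx.2
    exact volterraConv_congr hx.1 (ih.mono hsub) (hfg.mono hsub)

end Flat

section EulerMaclaurin

open Set MeasureTheory intervalIntegral

open scoped Nat

lemma bernoulliFun_integral_by_parts {g g' : ℝ → ℝ} (hg' : Continuous g')
    (hd : ∀ x, HasDerivAt g (g' x) x) (q : ℕ) (a h : ℝ) :
    (q + 1) * ∫ t in 0..1, bernoulliFun q t * g ((a + t) * h) =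
      bernoulliFun (q + 1) 1 * g ((a + 1) * h) - bernoulliFun (q + 1) 0 * g (a * h)
        - h * ∫ t in 0..1, bernoulliFun (q + 1) t * g' ((a + t) * h) := by
  have hchain (t : ℝ) : HasDerivAt (fun t ↦ g ((a + t) * h)) (g' ((a + t) * h) * h) t := by
    simpa using! (hd _).comp t (((hasDerivAt_id t).const_add a).mul_const h)
  have hB (t : ℝ) : HasDerivAt (bernoulliFun (q + 1)) ((q + 1) * bernoulliFun q t) t := by
    simpa using hasDerivAt_bernoulliFun (q + 1) t
  calc (q + 1) * ∫ t in 0..1, bernoulliFun q t * g ((a + t) * h)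
      = ∫ t in 0..1, g ((a + t) * h) * ((q + 1) * bernoulliFun q t) := by
        rw [← intervalIntegral.integral_const_mul]
        congr! 2
        ring
    _ = g ((a + 1) * h) * bernoulliFun (q + 1) 1 - g ((a + 0) * h) * bernoulliFun (q + 1) 0
        - ∫ t in 0..1, g' ((a + t) * h) * h * bernoulliFun (q + 1) t :=
      integral_mul_deriv_eq_deriv_mul (fun t _ ↦ hchain t) (fun t _ ↦ hB t)
        (Continuous.intervalIntegrable (by fun_prop) _ _)
        (Continuous.intervalIntegrable (by fun_prop) _ _)
    _ = _ := by
        rw [← intervalIntegral.integral_const_mul, add_zero, mul_comm (g _), mul_comm (g _)]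
        congr! 3
        ring

/-- The Euler–Maclaurin remainder of order `q` for `G` on the mesh `0, h, …, k * h`, up to the
factor `(-h) ^ q / q! * h`. On each cell the periodic Bernoulli function is `bernoulliFun q` in the
rescaled variable `t ∈ [0, 1]`. -/
noncomputable def bernoulliRemainder (G : ℝ → ℝ) (h : ℝ) (k q : ℕ) : ℝ :=
  ∑ j ∈ Finset.range k, ∫ t in 0..1, bernoulliFun q t * iteratedDeriv q G ((j + t) * h)

lemma mul_bernoulliRemainder_zero {G : ℝ → ℝ} (hG : Continuous G) (h : ℝ) (k : ℕ) :
    h * bernoulliRemainder G h k 0 = ∫ y in 0..k * h, G y := by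
  have hscaled : Continuous fun s ↦ G (s * h) := by fun_prop
  have hcell (j : ℕ) : ∫ t in 0..1, G ((j + t) * h) = ∫ s in (j : ℝ)..(j + 1 : ℕ), G (s * h) := by
    rw [integral_comp_add_left (fun s ↦ G (s * h)) (j : ℝ)]
    simp
  calc h * bernoulliRemainder G h k 0
      = h * ∑ j ∈ Finset.range k, ∫ s in (j : ℝ)..(j + 1 : ℕ), G (s * h) := by
        simp [bernoulliRemainder, hcell]
    _ = h * ∫ s in (0 : ℕ)..(k : ℝ), G (s * h) := by
        rw [sum_integral_adjacent_intervals fun j _ ↦ hscaled.intervalIntegrable _ _]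
    _ = ∫ y in 0..k * h, G y := by
        rw [mul_integral_comp_mul_right]
        simp

lemma sum_range_mul_succ_sub_mul {R : Type*} [NonUnitalNonAssocRing R] (a b : R) {u : ℕ → R}
    {k : ℕ} (h0 : u 0 = 0) (hk : u k = 0) :
    ∑ j ∈ Finset.range k, (a * u (j + 1) - b * u j) =
      (a - b) * ∑ j ∈ Finset.range (k + 1), u j := by
  have hshift : ∑ j ∈ Finset.range k, u (j + 1) = ∑ j ∈ Finset.range (k + 1), u j := by
    rw [Finset.sum_range_succ', h0, add_zero]
  have hinit : ∑ j ∈ Finset.range k, u j = ∑ j ∈ Finset.range (k + 1), u j := by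
    rw [Finset.sum_range_succ, hk, add_zero]
  rw [Finset.sum_sub_distrib, ← Finset.mul_sum, ← Finset.mul_sum, hshift, hinit, sub_mul]

variable {n : ℕ} {G : ℝ → ℝ} {h : ℝ} {k : ℕ}

lemma bernoulliRemainder_recurrence (hG0 : IsFlatAt n G 0) (hGk : IsFlatAt n G (k * h)) {q : ℕ}
    (hq : q < n) :
    (q + 1) * bernoulliRemainder G h k q =
      (bernoulliFun (q + 1) 1 - bernoulliFun (q + 1) 0) *
        ∑ j ∈ Finset.range (k + 1), iteratedDeriv q G (j * h)
      - h * bernoulliRemainder G h k (q + 1) := by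
  have hd (x : ℝ) : HasDerivAt (iteratedDeriv q G) (iteratedDeriv (q + 1) G x) x := by
    rw [iteratedDeriv_succ]
    exact (hG0.contDiff.differentiable_iteratedDeriv q (by exact_mod_cast hq) x).hasDerivAt
  have hc := hG0.contDiff.continuous_iteratedDeriv (q + 1) (by exact_mod_cast hq)
  rw [← sum_range_mul_succ_sub_mul (u := fun j : ℕ ↦ iteratedDeriv q G (j * h))
    _ _ (by simpa using hG0.iteratedDeriv_eq_zero q hq) (hGk.iteratedDeriv_eq_zero q hq)]
  simp only [bernoulliRemainder, Finset.mul_sum, ← Finset.sum_sub_distrib, Nat.cast_add_one,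
    bernoulliFun_integral_by_parts hc hd]

lemma integral_sub_sum_eq_bernoulliRemainder (hn : 1 ≤ n) (hG0 : IsFlatAt n G 0)
    (hGk : IsFlatAt n G (k * h)) :
    (∫ y in 0..k * h, G y) - h * ∑ j ∈ Finset.range (k + 1), G (j * h) =
      (-h) ^ n / n ! * (h * bernoulliRemainder G h k n) := by
  rw [← mul_bernoulliRemainder_zero hG0.contDiff.continuous]
  suffices ∀ q, 1 ≤ q → q ≤ n → h * bernoulliRemainder G h k 0 -
      h * ∑ j ∈ Finset.range (k + 1), G (j * h) =
      (-h) ^ q / q ! * (h * bernoulliRemainder G h k q) from this n hn le_rfl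
  intro q hq
  induction q, hq using Nat.le_induction with
  | base =>
    intro hn
    have hrec := bernoulliRemainder_recurrence hG0 hGk hn
    norm_num [bernoulliFun_eval_one] at hrec ⊢
    linear_combination h * hrec
  | succ q hq ih =>
    intro hqn
    have hrec := bernoulliRemainder_recurrence hG0 hGk hqn
    rw [bernoulliFun_endpoints_eq_of_ne_one (by lia)] at hrec
    rw [ih (by lia), Nat.factorial_succ]
    push_cast
    field_simp
    linear_combination (-h) ^ q * h * hrec

lemma abs_bernoulliRemainder_le {β M : ℝ} {q : ℕ} (hh : 0 ≤ h)
    (hβ : ∀ t ∈ Icc 0 1, |bernoulliFun q t| ≤ β)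
    (hM : ∀ y ∈ Icc 0 (k * h), |iteratedDeriv q G y| ≤ M) :
    |bernoulliRemainder G h k q| ≤ k * (β * M) := by
  have hcell : ∀ j ∈ Finset.range k,
      |∫ t in 0..1, bernoulliFun q t * iteratedDeriv q G ((j + t) * h)| ≤ β * M := by
    intro j hj
    have hjk : (j : ℝ) + 1 ≤ k := by exact_mod_cast Finset.mem_range.1 hj
    suffices ∀ t ∈ uIoc 0 1, ‖bernoulliFun q t * iteratedDeriv q G ((j + t) * h)‖ ≤ β * M by
      simpa using norm_integral_le_of_norm_le_const this
    intro t ht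
    rw [uIoc_of_le zero_le_one] at ht
    have ht0 : 0 ≤ t := ht.1.le
    have hmem : (j + t) * h ∈ Icc 0 (k * h) :=
      ⟨by positivity, mul_le_mul_of_nonneg_right (by linarith [ht.2]) hh⟩
    rw [norm_mul]
    exact mul_le_mul (hβ t ⟨ht0, ht.2⟩) (hM _ hmem) (abs_nonneg _)
      ((abs_nonneg _).trans (hβ t ⟨ht0, ht.2⟩))
  calc |bernoulliRemainder G h k q| ≤ ∑ _j ∈ Finset.range k, β * M :=
        (Finset.abs_sum_le_sum_abs _ _).trans (Finset.sum_le_sum hcell)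
    _ = k * (β * M) := by simp

lemma abs_sum_sub_integral_le {β M : ℝ} (hn : 1 ≤ n) (hG0 : IsFlatAt n G 0)
    (hGk : IsFlatAt n G (k * h)) (hh : 0 ≤ h) (hβ : ∀ t ∈ Icc 0 1, |bernoulliFun n t| ≤ β)
    (hM : ∀ y ∈ Icc 0 (k * h), |iteratedDeriv n G y| ≤ M) :
    |h * ∑ j ∈ Finset.range (k + 1), G (j * h) - ∫ y in 0..k * h, G y| ≤
      h ^ n / n ! * (k * h) * (β * M) := by
  rw [abs_sub_comm, integral_sub_sum_eq_bernoulliRemainder hn hG0 hGk, abs_mul, abs_mul, abs_div,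
    abs_pow, abs_neg, abs_of_nonneg hh, Nat.abs_cast]
  calc h ^ n / n ! * (h * |bernoulliRemainder G h k n|)
      ≤ h ^ n / n ! * (h * (k * (β * M))) := by
        gcongr
        exact abs_bernoulliRemainder_le hh hβ hM
    _ = h ^ n / n ! * (k * h) * (β * M) := by ring

lemma exists_pos_abs_bernoulliFun_le (q : ℕ) :
    ∃ β > 0, ∀ t ∈ Icc 0 1, |bernoulliFun q t| ≤ β := by
  obtain ⟨β, hβ0, hβ⟩ := (isCompact_Icc.image
    (continuous_bernoulliFun q)).isBounded.exists_pos_norm_le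
  exact ⟨β, hβ0, fun t ht ↦ hβ _ (mem_image_of_mem _ ht)⟩

end EulerMaclaurin

section Supremum

open Set

variable {ι α : Type*} [ConditionallyCompleteLattice α]

lemma le_cbiSup {s : Set ι} {f : ι → α} (hf : BddAbove (f '' s)) {i : ι} (hi : i ∈ s) :
    f i ≤ ⨆ j ∈ s, f j := by
  have hrange : ⋃ j, range (fun _ : j ∈ s ↦ f j) = f '' s := by
    ext
    simp
  exact le_ciSup₂ (f := fun j (_ : j ∈ s) ↦ f j) (hrange ▸ hf) i hi

lemma le_cbiSup_finset {s : Finset ι} (f : ι → α) {i : ι} (hi : i ∈ s) : f i ≤ ⨆ j ∈ s, f j :=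
  le_cbiSup (s := (s : Set ι)) (s.finite_toSet.image f).bddAbove hi

end Supremum

section IntegrandDeriv

open Set

/-- The inner maximum in `C2`: the maximum over `[0, x]` of the absolute value of the `n`-th
derivative of the integrand `z ↦ F z * f (x - z)` of `volterraConv F f x`. For `x = 0` the interval
is degenerate and the value carries no information. -/
noncomputable def integrandDerivSup (n : ℕ) (F f : ℝ → ℝ) (x : ℝ) : ℝ :=
  ⨆ y ∈ Icc 0 x, |iteratedDerivWithin n (fun z ↦ F z * f (x - z)) (Icc 0 x) y|

lemma integrandDerivSup_nonneg (n : ℕ) (F f : ℝ → ℝ) (x : ℝ) : 0 ≤ integrandDerivSup n F f x :=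
  Real.iSup_nonneg fun _ ↦ Real.iSup_nonneg fun _ ↦ abs_nonneg _

lemma integrandDerivSup_congr (n : ℕ) {F G f g : ℝ → ℝ} {x : ℝ} (hFG : EqOn F G (Icc 0 x))
    (hfg : EqOn f g (Icc 0 x)) : integrandDerivSup n F f x = integrandDerivSup n G g x := by
  have hintegrand : EqOn (fun z ↦ F z * f (x - z)) (fun z ↦ G z * g (x - z)) (Icc 0 x) :=
    fun z hz ↦ congr_arg₂ (· * ·) (hFG hz) (hfg ⟨sub_nonneg.2 hz.2, sub_le_self x hz.1⟩)
  exact iSup_congr fun y ↦ iSup_congr fun hy ↦ by rw [iteratedDerivWithin_congr hintegrand hy]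

lemma abs_iteratedDeriv_le_integrandDerivSup {n : ℕ} {F f : ℝ → ℝ} {x y : ℝ}
    (hF : ContDiff ℝ n F) (hf : ContDiff ℝ n f) (hx : 0 < x) (hy : y ∈ Icc 0 x) :
    |iteratedDeriv n (fun z ↦ F z * f (x - z)) y| ≤ integrandDerivSup n F f x := by
  have hG : ContDiff ℝ n fun z ↦ F z * f (x - z) := by fun_prop
  have hwithin : EqOn (iteratedDerivWithin n (fun z ↦ F z * f (x - z)) (Icc 0 x))
      (iteratedDeriv n fun z ↦ F z * f (x - z)) (Icc 0 x) := fun z hz ↦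
    iteratedDerivWithin_eq_iteratedDeriv (uniqueDiffOn_Icc hx) hG.contDiffAt hz
  rw [← hwithin hy]
  refine le_cbiSup (f := fun y ↦ |iteratedDerivWithin n _ _ y|) (isCompact_Icc.bddAbove_image ?_) hy
  exact ((hG.continuous_iteratedDeriv n le_rfl).continuousOn.congr hwithin).abs

end IntegrandDeriv

section C2

variable {p : ℕ} {f : ℝ → ℝ} {h : ℝ} {n k : ℕ}

lemma C2_eq_iSup (p : ℕ) (f : ℝ → ℝ) (h : ℝ) (n k : ℕ) :
    C2 p f h n k = ⨆ m ∈ Finset.range (n - 1), ⨆ t ∈ Finset.Nat.antidiagonalTuple (m + 1) k,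
      integrandDerivSup (2 * p) (iterConv f (n - 1 - m)) f (t 0 * h) *
        ∏ i : Fin m, f (t i.succ * h) := by
  have hprod (m : ℕ) (g : Fin (m + 1) → ℝ) :
      ∏ i ∈ Finset.univ.filter (· ≠ 0), g i = ∏ i : Fin m, g i.succ := by
    simp [Finset.prod_filter, Fin.prod_univ_succ]
  simp only [C2, hprod, integrandDerivSup]

lemma le_C2 {m : ℕ} (hm : m < n - 1) {t : Fin (m + 1) → ℕ} (ht : ∑ i, t i = k) :
    integrandDerivSup (2 * p) (iterConv f (n - 1 - m)) f (t 0 * h) *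
      ∏ i : Fin m, f (t i.succ * h) ≤ C2 p f h n k := by
  rw [C2_eq_iSup]
  refine le_trans ?_ (le_cbiSup_finset _ (Finset.mem_range.2 hm))
  exact le_cbiSup_finset (fun t : Fin (m + 1) → ℕ ↦
    integrandDerivSup (2 * p) (iterConv f (n - 1 - m)) f (t 0 * h) *
      ∏ i : Fin m, f (t i.succ * h)) (Finset.Nat.mem_antidiagonalTuple.2 ht)

lemma C2_le {B : ℝ} (hB : 0 ≤ B)
    (hterm : ∀ m < n - 1, ∀ t : Fin (m + 1) → ℕ, ∑ i, t i = k →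
      integrandDerivSup (2 * p) (iterConv f (n - 1 - m)) f (t 0 * h) *
        ∏ i : Fin m, f (t i.succ * h) ≤ B) :
    C2 p f h n k ≤ B := by
  rw [C2_eq_iSup]
  exact Real.iSup_le (fun m ↦ Real.iSup_le (fun hm ↦ Real.iSup_le (fun t ↦ Real.iSup_le (fun ht ↦
    hterm m (Finset.mem_range.1 hm) t (Finset.Nat.mem_antidiagonalTuple.1 ht)) hB) hB) hB) hB

lemma integrandDerivSup_le_C2 (p : ℕ) (f : ℝ → ℝ) (h : ℝ) (n k : ℕ) :
    integrandDerivSup (2 * p) (iterConv f (n + 1)) f (k * h) ≤ C2 p f h (n + 2) k := by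
  simpa using le_C2 (p := p) (f := f) (h := h) (n := n + 2) (k := k) (m := 0) (t := fun _ ↦ k)
    (by lia) (by simp)

lemma C2_nonneg (p : ℕ) (f : ℝ → ℝ) (h : ℝ) (n k : ℕ) : 0 ≤ C2 p f h (n + 2) k :=
  (integrandDerivSup_nonneg ..).trans (integrandDerivSup_le_C2 p f h n k)

lemma C2_mul_le_C2_add {j l : ℕ} (hf : 0 ≤ f (l * h)) :
    C2 p f h (n + 2) j * f (l * h) ≤ C2 p f h (n + 3) (j + l) := by
  have hC : 0 ≤ C2 p f h (n + 3) (j + l) := C2_nonneg p f h (n + 1) (j + l)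
  rcases hf.eq_or_lt with hzero | hpos
  · rwa [← hzero, mul_zero]
  rw [← le_div_iff₀ hpos]
  refine C2_le (by positivity) fun m hm t ht ↦ ?_
  rw [le_div_iff₀ hpos]
  have hsum : ∑ i, (Fin.snoc t l : Fin (m + 2) → ℕ) i = j + l := by
    simp [Fin.sum_univ_castSucc, ht]
  refine le_trans (le_of_eq ?_) (le_C2 (by lia) hsum)
  have hprod : ∏ i : Fin (m + 1), f ((Fin.snoc t l : Fin (m + 2) → ℕ) i.succ * h) =
      (∏ i : Fin m, f (t i.succ * h)) * f (l * h) := by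
    simp only [Fin.prod_univ_castSucc, Fin.succ_castSucc, Fin.snoc_castSucc, Fin.succ_last,
      Fin.snoc_last]
  rw [hprod, mul_assoc, show n + 3 - 1 - (m + 1) = n + 2 - 1 - m by lia]
  rfl

end C2

section ConvolutionError

open Set

open scoped Nat

/-- The values of `f` at the mesh points `0, h, 2 * h, …`. -/
def sample (h : ℝ) (f : ℝ → ℝ) (j : ℕ) : ℝ :=
  f (j * h)

lemma sample_sub {h : ℝ} (f : ℝ → ℝ) {j k : ℕ} (hjk : j ≤ k) :
    sample h f (k - j) = f (k * h - j * h) := by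
  rw [sample, Nat.cast_sub hjk, sub_mul]

lemma dconv_congr {h : ℝ} {u v u' v' : ℕ → ℝ} {k : ℕ} (hu : ∀ j ≤ k, u j = u' j)
    (hv : ∀ j ≤ k, v j = v' j) : dconv h u v k = dconv h u' v' k := by
  refine congr_arg (h * ·) (Finset.sum_congr rfl fun j hj ↦ ?_)
  rw [hu j (by grind), hv (k - j) (Nat.sub_le k j)]

lemma dconv_sub_left (h : ℝ) (u v w : ℕ → ℝ) (k : ℕ) :
    dconv h (u - v) w k = dconv h u w k - dconv h v w k := by
  simp only [dconv, Pi.sub_apply, sub_mul, Finset.sum_sub_distrib, mul_sub]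

lemma abs_dconv_le {h B : ℝ} {u v : ℕ → ℝ} {k : ℕ} (hh : 0 ≤ h) (hv : v 0 = 0)
    (hB : ∀ j < k, |u j| * |v (k - j)| ≤ B) : |dconv h u v k| ≤ k * h * B := by
  have hsum : |∑ j ∈ Finset.range k, u j * v (k - j)| ≤ ∑ _j ∈ Finset.range k, B :=
    (Finset.abs_sum_le_sum_abs _ _).trans (Finset.sum_le_sum fun j hj ↦ by
      rw [abs_mul]
      exact hB j (Finset.mem_range.1 hj))
  rw [dconv, Finset.sum_range_succ, Nat.sub_self, hv, mul_zero, add_zero, abs_mul,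
    abs_of_nonneg hh, mul_right_comm, mul_comm]
  gcongr
  simpa [mul_comm] using hsum

variable {n : ℕ} {h β : ℝ}

lemma abs_dconv_sub_volterraConv_le {F f : ℝ → ℝ} (hn : 1 ≤ n) (hF : IsFlatAt n F 0)
    (hf : IsFlatAt n f 0) (hβ : ∀ t ∈ Icc 0 1, |bernoulliFun n t| ≤ β) (hh : 0 < h) (k : ℕ) :
    |dconv h (sample h F) (sample h f) k - volterraConv F f (k * h)| ≤
      h ^ n / n ! * (k * h) * (β * integrandDerivSup n F f (k * h)) := by
  rcases k.eq_zero_or_pos with rfl | hk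
  · simp [dconv, sample, volterraConv, hf.eq_zero (by lia)]
  have hx : 0 < k * h := by positivity
  have hreflect : IsFlatAt n (fun z ↦ f (k * h - z)) (k * h) := by
    simpa using hf.comp_const_sub (k * h)
  have hflat_left : IsFlatAt n (fun z ↦ F z * f (k * h - z)) 0 := hF.mul hreflect.contDiff
  have hflat_right : IsFlatAt n (fun z ↦ F z * f (k * h - z)) (k * h) := by
    simpa only [mul_comm] using hreflect.mul hF.contDiff
  have hdconv : dconv h (sample h F) (sample h f) k =
      h * ∑ j ∈ Finset.range (k + 1), F (j * h) * f (k * h - j * h) :=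
    congr_arg (h * ·) (Finset.sum_congr rfl fun j hj ↦ by rw [sample_sub f (by grind), sample])
  rw [hdconv]
  exact abs_sum_sub_integral_le hn hflat_left hflat_right hh.le hβ fun y hy ↦
    abs_iteratedDeriv_le_integrandDerivSup hF.contDiff hf.contDiff hx hy

variable {γ : ℝ} {f g : ℝ → ℝ}

lemma abs_dconv_iterConv_sub_le (hn : 1 ≤ n) (hg : IsFlatAt n g 0) (hfg : EqOn f g (Icc 0 γ))
    (hβ : ∀ t ∈ Icc 0 1, |bernoulliFun n t| ≤ β) (hh : 0 < h) (m : ℕ) {k : ℕ} (hk : k * h ≤ γ) :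
    |dconv h (sample h (iterConv f (m + 1))) (sample h f) k - iterConv f (m + 2) (k * h)| ≤
      h ^ n / n ! * (k * h) * (β * integrandDerivSup n (iterConv f (m + 1)) f (k * h)) := by
  have hsub : Icc 0 (k * h) ⊆ Icc 0 γ := Icc_subset_Icc_right hk
  have hf_eq : EqOn f g (Icc 0 (k * h)) := hfg.mono hsub
  have hF_eq : EqOn (iterConv f (m + 1)) (iterConv g (m + 1)) (Icc 0 (k * h)) :=
    (iterConv_eqOn hfg m).mono hsub
  have hmesh : ∀ j ≤ k, j * h ∈ Icc 0 (k * h) := fun j hj ↦ ⟨by positivity, by gcongr⟩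
  have hdconv : dconv h (sample h (iterConv f (m + 1))) (sample h f) k =
      dconv h (sample h (iterConv g (m + 1))) (sample h g) k :=
    dconv_congr (fun j hj ↦ hF_eq (hmesh j hj)) fun j hj ↦ hf_eq (hmesh j hj)
  have hiter : iterConv f (m + 2) (k * h) = volterraConv (iterConv g (m + 1)) g (k * h) :=
    volterraConv_congr (by positivity) hF_eq hf_eq
  rw [hdconv, hiter, integrandDerivSup_congr n hF_eq hf_eq]
  exact abs_dconv_sub_volterraConv_le hn (isFlatAt_iterConv hg m) hg hβ hh k

variable {p : ℕ}

lemma abs_dconv_iterConv_sub_le_C2 (hp : 1 ≤ p) (hg : IsFlatAt (2 * p) g 0)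
    (hfg : EqOn f g (Icc 0 γ)) (hβ : ∀ t ∈ Icc 0 1, |bernoulliFun (2 * p) t| ≤ β) (hh : 0 < h)
    (m : ℕ) {k : ℕ} (hk : k * h ≤ γ) :
    |dconv h (sample h (iterConv f (m + 1))) (sample h f) k - iterConv f (m + 2) (k * h)| ≤
      h ^ (2 * p) / (2 * p)! * γ * β * C2 p f h (m + 2) k := by
  have hβ0 : 0 ≤ β := (abs_nonneg _).trans (hβ 0 (by simp))
  have hγ0 : 0 ≤ γ := le_trans (by positivity) hk
  calc _ ≤ h ^ (2 * p) / (2 * p)! * (k * h) *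
        (β * integrandDerivSup (2 * p) (iterConv f (m + 1)) f (k * h)) :=
        abs_dconv_iterConv_sub_le (by lia) hg hfg hβ hh m hk
    _ ≤ h ^ (2 * p) / (2 * p)! * γ * (β * C2 p f h (m + 2) k) := by
        gcongr
        · exact mul_nonneg hβ0 (integrandDerivSup_nonneg ..)
        · exact integrandDerivSup_le_C2 p f h m k
    _ = h ^ (2 * p) / (2 * p)! * γ * β * C2 p f h (m + 2) k := by ring

lemma abs_dconv_error_le {K : ℝ} {r : ℕ} {e : ℕ → ℝ} {k : ℕ} (hh : 0 ≤ h) (hK : 0 ≤ K)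
    (hf0 : f 0 = 0) (hf : ∀ j ≤ k, 0 ≤ f (j * h))
    (he : ∀ j < k, |e j| ≤ (1 + j * h) ^ r * K * C2 p f h (r + 2) j) :
    |dconv h e (sample h f) k| ≤ k * h * ((1 + k * h) ^ r * K * C2 p f h (r + 3) k) := by
  refine abs_dconv_le hh (by simp [sample, hf0]) fun j hj ↦ ?_
  have hfj : 0 ≤ f ((k - j : ℕ) * h) := hf _ (Nat.sub_le k j)
  have hC2 : C2 p f h (r + 2) j * f ((k - j : ℕ) * h) ≤ C2 p f h (r + 3) k := by
    simpa [Nat.add_sub_cancel' hj.le] using C2_mul_le_C2_add (p := p) (n := r) (j := j) hfj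
  calc |e j| * |f ((k - j : ℕ) * h)|
      ≤ (1 + j * h) ^ r * K * C2 p f h (r + 2) j * f ((k - j : ℕ) * h) := by
        rw [abs_of_nonneg hfj]
        gcongr
        exact he j hj
    _ = (1 + j * h) ^ r * K * (C2 p f h (r + 2) j * f ((k - j : ℕ) * h)) := by ring
    _ ≤ (1 + k * h) ^ r * K * C2 p f h (r + 3) k := by
        gcongr
        exact mul_nonneg (C2_nonneg p f h r j) hfj

lemma abs_dpow_sub_iterConv_le (hp : 1 ≤ p) (hg : IsFlatAt (2 * p) g 0)
    (hfg : EqOn f g (Icc 0 γ)) (hf : ∀ x ∈ Icc 0 γ, 0 ≤ f x)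
    (hβ : ∀ t ∈ Icc 0 1, |bernoulliFun (2 * p) t| ≤ β) (hh : 0 < h) (r : ℕ) {k : ℕ}
    (hk : k * h ≤ γ) :
    |dpow h (sample h f) (r + 2) k - iterConv f (r + 2) (k * h)| ≤
      (1 + k * h) ^ r * (h ^ (2 * p) / (2 * p)! * γ * β) * C2 p f h (r + 2) k := by
  have hγ0 : 0 ≤ γ := le_trans (by positivity) hk
  have hβ0 : 0 ≤ β := (abs_nonneg _).trans (hβ 0 (by simp))
  induction r generalizing k with
  | zero =>
    rw [pow_zero, one_mul]
    exact abs_dconv_iterConv_sub_le_C2 hp hg hfg hβ hh 0 hk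
  | succ r ih =>
    set K := h ^ (2 * p) / (2 * p)! * γ * β
    have hf0 : f 0 = 0 := by rw [hfg ⟨le_rfl, hγ0⟩, hg.eq_zero (by lia)]
    have hmesh : ∀ j ≤ k, j * h ≤ γ := fun j hj ↦ le_trans (by gcongr) hk
    have hC2 : 0 ≤ C2 p f h (r + 3) k := C2_nonneg p f h (r + 1) k
    have hone : 1 ≤ (1 + k * h) ^ r := one_le_pow₀ (le_add_of_nonneg_right (by positivity))
    have hpropagated : |dconv h (dpow h (sample h f) (r + 2) - sample h (iterConv f (r + 2)))
        (sample h f) k| ≤ k * h * ((1 + k * h) ^ r * K * C2 p f h (r + 3) k) :=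
      abs_dconv_error_le hh.le (by positivity) hf0
        (fun j hj ↦ hf _ ⟨by positivity, hmesh j hj⟩) fun j hj ↦ ih (hmesh j hj.le)
    have hnew : |dconv h (sample h (iterConv f (r + 2))) (sample h f) k
        - iterConv f (r + 3) (k * h)| ≤ K * C2 p f h (r + 3) k :=
      abs_dconv_iterConv_sub_le_C2 hp hg hfg hβ hh (r + 1) hk
    rw [dconv_sub_left] at hpropagated
    calc _ ≤ k * h * ((1 + k * h) ^ r * K * C2 p f h (r + 3) k) + K * C2 p f h (r + 3) k :=
          (abs_sub_le _ _ _).trans (add_le_add hpropagated hnew)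
      _ ≤ k * h * ((1 + k * h) ^ r * K * C2 p f h (r + 3) k)
          + (1 + k * h) ^ r * (K * C2 p f h (r + 3) k) :=
          add_le_add le_rfl (le_mul_of_one_le_left (by positivity) hone)
      _ = (1 + k * h) ^ (r + 1) * K * C2 p f h (r + 3) k := by ring

end ConvolutionError

/-- Error bound for the iterated discrete (trapezoidal-rule) convolution: there is a constant
`C₁ > 0`, depending only on `p` and `γ`, such that for every `f ∈ C₀^{2p}([0,γ])` nonnegative,
every `N ≥ 1` (with `h = γ/N`, `x_j = j·h`, `f̄(x_j) = f(x_j)`), every `n ≥ 2` and every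
`k ∈ {0,…,N}`:
`|f̄^{⊛n}(x_k) − f^{*n}(x_k)| ≤ (1+x_k)^{n−2} · C₁ · C₂(n,x_k) · N^{−2p}`. -/
theorem dpow_iterConv_error
    (p : ℕ) (hp : 1 ≤ p) (γ : ℝ) (hγ : 0 < γ) :
    ∃ C₁ : ℝ, 0 < C₁ ∧
      ∀ f : ℝ → ℝ,
        ContDiffOn ℝ (2 * p) f (Set.Icc 0 γ) →
        (∀ x ∈ Set.Icc (0:ℝ) γ, 0 ≤ f x) →
        (∀ k < 2 * p, iteratedDerivWithin k f (Set.Icc 0 γ) 0 = 0) →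
        ∀ N : ℕ, 1 ≤ N →
          ∀ n : ℕ, 2 ≤ n →
            ∀ k ≤ N,
              |dpow (γ / N) (fun j => f (j * (γ / N))) n k - iterConv f n (k * (γ / N))|
                ≤ (1 + k * (γ / N)) ^ (n - 2) * C₁ * C2 p f (γ / N) n k
                    * ((N : ℝ) ^ (2 * p))⁻¹ := by
  obtain ⟨β, hβ0, hβ⟩ := exists_pos_abs_bernoulliFun_le (2 * p)
  refine ⟨γ ^ (2 * p) / (2 * p).factorial * γ * β, by positivity, ?_⟩
  intro f hf hpos hv N hN n hn k hk
  obtain ⟨g, hg, hfg⟩ := exists_isFlatAt_eqOn hγ (by exact_mod_cast hf) hv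
  obtain ⟨r, rfl⟩ := Nat.exists_eq_add_of_le' hn
  have hN0 : (0 : ℝ) < N := by exact_mod_cast hN
  have hkγ : k * (γ / N) ≤ γ := by
    rw [mul_div_left_comm]
    exact mul_le_of_le_one_right hγ.le (div_le_one_of_le₀ (by exact_mod_cast hk) hN0.le)
  calc _ ≤ (1 + k * (γ / N)) ^ r * ((γ / N) ^ (2 * p) / (2 * p).factorial * γ * β)
          * C2 p f (γ / N) (r + 2) k :=
        abs_dpow_sub_iterConv_le hp hg hfg hpos hβ (div_pos hγ hN0) r hkγ
    _ = _ := by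
        rw [div_pow, Nat.add_sub_cancel]
        ring
end

section
/- Let p ≥ 1 be an integer, γ > 0, f ∈ C₀^{2p}([0,γ]) with f ≥ 0, let N ≥ 1 be an integer, h = γ/N, x_j = j·h, and f̄(x_j) = f(x_j). Then there exists a constant C₁ > 0 depending only on p and γ such that for every k ∈ {0,1,…,N}, the discrete convolution f̄^{⊛2}(x_k) = h·Σ_{j=0}^{k} f(x_j) f(x_{k−j}) satisfies |f̄^{⊛2}(x_k) − f^{*2}(x_k)| ≤ C₁ · max_{0≤y≤x_k} |d^{2p}/dy^{2p}( f(y)·f(x_k−y) )| · N^{−2p}. -/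
/-- The continuous self-convolution `f^{*2}(x) = ∫₀ˣ f(y) f(x−y) dy`. -/
noncomputable def conv2 (f : ℝ → ℝ) (x : ℝ) : ℝ :=
  ∫ y in (0:ℝ)..x, f y * f (x - y)

/-- The trapezoidal-rule/discrete self-convolution
`f̄^{⊛2}(x_k) = h · Σ_{j=0}^{k} f(x_j) f(x_{k−j})` with `x_j = j·h`. -/
noncomputable def dconv2 (f : ℝ → ℝ) (h : ℝ) (k : ℕ) : ℝ :=
  h * ∑ j ∈ Finset.range (k + 1), f (j * h) * f ((k - j : ℕ) * h)

/-!
By the Euler–Maclaurin formula, the error of the composite trapezoidal rule is a sum of boundary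
terms, proportional to the differences of the derivatives of the integrand at the two endpoints,
plus the integral of its derivative of highest order against a bounded Bernoulli kernel times the
corresponding power of the mesh. The integrand `z ↦ f z * f (x - z)` of the convolution inherits
the vanishing of the derivatives of `f` at `0` by the Leibniz rule, and at `x` by its symmetry
under `z ↦ x - z`. Hence it vanishes at both endpoints, which makes the discrete convolution a
trapezoidal sum, and only the integral is left of the error.
-/

section BernoulliKernel

open Set MeasureTheory

/-- The 1-periodic extension of the Bernoulli polynomial `B_m`, rescaled so that its period cells
are `[a + i * h, a + (i + 1) * h)`: the Peano kernel of the composite trapezoidal rule with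
nodes `a + i * h`. It jumps at the nodes for `m = 1` and is continuous for `m ≠ 1`. -/
noncomputable def bernoulliKernel (m : ℕ) (a h t : ℝ) : ℝ :=
  bernoulliFun m (Int.fract ((t - a) / h))

lemma bernoulliKernel_node (m : ℕ) (a : ℝ) {h : ℝ} (hh : h ≠ 0) (i : ℕ) :
    bernoulliKernel m a h (a + i * h) = bernoulli m := by
  simp [bernoulliKernel, hh, bernoulliFun_eval_zero]

lemma bernoulliKernel_one_of_mem_Ioo {a h t : ℝ} (hh : 0 < h) {i : ℕ}
    (ht : t ∈ Ioo (a + i * h) (a + (i + 1) * h)) :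
    h * bernoulliKernel 1 a h t = t - (a + i * h + (a + (i + 1) * h)) / 2 := by
  have hfloor : ⌊(t - a) / h⌋ = (i : ℤ) := by
    rw [Int.floor_eq_iff, le_div_iff₀ hh, div_lt_iff₀ hh]
    push_cast
    constructor <;> linarith [ht.1, ht.2]
  rw [bernoulliKernel, bernoulliFun_one, Int.fract, hfloor]
  push_cast
  field

lemma exists_abs_bernoulliKernel_le (m : ℕ) :
    ∃ B : ℝ, 0 < B ∧ ∀ a h t, |bernoulliKernel m a h t| ≤ B := by
  obtain ⟨B, hB⟩ := isCompact_Icc.exists_bound_of_continuousOn (s := Icc (0 : ℝ) 1)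
    (continuous_bernoulliFun m).continuousOn
  exact ⟨max B 1, by positivity, fun a h t => (hB _ (unitInterval.fract_mem _)).trans
    (le_max_left B 1)⟩

lemma continuous_bernoulliKernel {m : ℕ} (hm : m ≠ 1) (a h : ℝ) :
    Continuous (bernoulliKernel m a h) := by
  have hperiodic : Continuous (bernoulliFun m ∘ Int.fract) :=
    (continuous_bernoulliFun m).continuousOn.comp_fract''
      (bernoulliFun_endpoints_eq_of_ne_one hm).symm
  exact hperiodic.comp (by fun_prop : Continuous fun t : ℝ => (t - a) / h)

lemma measurable_bernoulliKernel (m : ℕ) (a h : ℝ) : Measurable (bernoulliKernel m a h) :=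
  (continuous_bernoulliFun m).measurable.comp (by fun_prop)

lemma intervalIntegrable_bernoulliKernel_mul (m : ℕ) (a h : ℝ) {g : ℝ → ℝ} {c d : ℝ}
    (hg : IntervalIntegrable g volume c d) :
    IntervalIntegrable (fun t => bernoulliKernel m a h t * g t) volume c d := by
  obtain ⟨B, -, hB⟩ := exists_abs_bernoulliKernel_le m
  exact ⟨hg.1.bdd_mul (measurable_bernoulliKernel m a h).aestronglyMeasurable
      (.of_forall (hB a h)),
    hg.2.bdd_mul (measurable_bernoulliKernel m a h).aestronglyMeasurable
      (.of_forall (hB a h))⟩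

lemma hasDerivWithinAt_Ici_fract (x : ℝ) : HasDerivWithinAt Int.fract 1 (Ici x) x := by
  refine ((hasDerivAt_id x).sub_const (⌊x⌋ : ℝ)).hasDerivWithinAt.congr_of_eventuallyEq ?_ rfl
  filter_upwards [Ico_mem_nhdsGE (Int.lt_floor_add_one x)] with y hy
  rw [Int.fract, Int.floor_eq_iff.2 ⟨(Int.floor_le x).trans hy.1, hy.2⟩, id]

lemma hasDerivWithinAt_Ioi_bernoulliKernel (m : ℕ) (a : ℝ) {h : ℝ} (hh : 0 < h) (x : ℝ) :
    HasDerivWithinAt (bernoulliKernel (m + 1) a h)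
      ((m + 1) / h * bernoulliKernel m a h x) (Ioi x) x := by
  have hscale : HasDerivWithinAt (fun t => (t - a) / h) (1 / h) (Ioi x) x :=
    (((hasDerivAt_id x).sub_const a).div_const h).hasDerivWithinAt
  have hmaps : MapsTo (fun t => (t - a) / h) (Ioi x) (Ici ((x - a) / h)) := fun t ht => by
    have : x ≤ t := le_of_lt ht
    simp only [mem_Ici]
    gcongr
  have hfract := (hasDerivWithinAt_Ici_fract ((x - a) / h)).comp x hscale hmaps
  refine ((hasDerivAt_bernoulliFun (m + 1) _).comp_hasDerivWithinAt x hfract).congr_deriv ?_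
  simp only [bernoulliKernel, Nat.add_sub_cancel, Function.comp_apply]
  push_cast
  ring

end BernoulliKernel

section EulerMaclaurin

open Set MeasureTheory intervalIntegral
open scoped Nat Topology

lemma hasDerivAt_iteratedDerivWithin {𝕜 F : Type*} [NontriviallyNormedField 𝕜]
    [NormedAddCommGroup F] [NormedSpace 𝕜 F] {f : 𝕜 → F} {s : Set 𝕜} {x : 𝕜} {m n : ℕ}
    (hf : ContDiffOn 𝕜 n f s) (hmn : m < n) (hs : UniqueDiffOn 𝕜 s) (hx : s ∈ 𝓝 x) :
    HasDerivAt (iteratedDerivWithin m f s) (iteratedDerivWithin (m + 1) f s x) x := by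
  rw [iteratedDerivWithin_succ]
  exact (hf.differentiableOn_iteratedDerivWithin (by exact_mod_cast hmn) hs x
    (mem_of_mem_nhds hx)).hasDerivWithinAt.hasDerivAt hx

lemma trapezoidal_error_one_eq_integral {g g' : ℝ → ℝ} {a b : ℝ} (hg : ContinuousOn g (uIcc a b))
    (hderiv : ∀ x ∈ Ioo (min a b) (max a b), HasDerivAt g (g' x) x)
    (hg' : IntervalIntegrable g' volume a b) :
    trapezoidal_error g 1 a b = ∫ t in a..b, (t - (a + b) / 2) * g' t := by
  rw [integral_mul_deriv_eq_deriv_mul_of_hasDerivAt (u := fun t => t - (a + b) / 2)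
    (u' := fun _ => 1) (by fun_prop) hg (fun x _ => (hasDerivAt_id x).sub_const _) hderiv
    intervalIntegrable_const hg', trapezoidal_error, trapezoidal_integral_one]
  simp only [one_mul]
  ring

section Mesh

variable {a h : ℝ} {N : ℕ}

lemma trapezoidal_integral_eq_mul_sum_sub (g : ℝ → ℝ) (hN : 0 < N) :
    trapezoidal_integral g N a (a + N * h) =
      h * (∑ j ∈ Finset.range (N + 1), g (a + j * h) - (g a + g (a + N * h)) / 2) := by
  obtain ⟨N, rfl⟩ := Nat.exists_eq_succ_of_ne_zero hN.ne'
  have hnode (j : ℕ) : a + (j + 1) * (a + (N + 1 : ℕ) * h - a) / (N + 1 : ℕ) =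
      a + (j + 1 : ℕ) * h := by
    push_cast
    field
  have hmesh : (a + (N + 1 : ℕ) * h - a) / (N + 1 : ℕ) = h := by
    push_cast
    field
  rw [trapezoidal_integral, Finset.sum_range_succ, Finset.sum_range_succ']
  simp only [Nat.succ_eq_add_one, hnode, hmesh, Nat.add_sub_cancel, Nat.cast_zero, zero_mul,
    add_zero]
  ring

lemma trapezoidal_error_one_eq_integral_bernoulliKernel {g g' : ℝ → ℝ} (hh : 0 < h) (i : ℕ)
    (hg : ContinuousOn g (Icc (a + i * h) (a + (i + 1) * h)))
    (hderiv : ∀ x ∈ Ioo (a + i * h) (a + (i + 1) * h), HasDerivAt g (g' x) x)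
    (hg' : IntervalIntegrable g' volume (a + i * h) (a + (i + 1) * h)) :
    trapezoidal_error g 1 (a + i * h) (a + (i + 1) * h) =
      h * ∫ t in a + i * h..a + (i + 1) * h, bernoulliKernel 1 a h t * g' t := by
  have hle : a + i * h ≤ a + (i + 1) * h := by gcongr; linarith
  rw [trapezoidal_error_one_eq_integral (by rwa [uIcc_of_le hle])
    (by rwa [min_eq_left hle, max_eq_right hle]) hg', ← intervalIntegral.integral_const_mul]
  refine integral_congr_Ioo_of_le hle fun t ht => ?_
  rw [← bernoulliKernel_one_of_mem_Ioo hh ht, mul_assoc]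

lemma trapezoidal_error_eq_integral_bernoulliKernel {g g' : ℝ → ℝ} (hh : 0 < h) (hN : 0 < N)
    (hg : ContinuousOn g (Icc a (a + N * h)))
    (hderiv : ∀ x ∈ Ioo a (a + N * h), HasDerivAt g (g' x) x)
    (hg' : IntervalIntegrable g' volume a (a + N * h)) :
    trapezoidal_error g N a (a + N * h) =
      h * ∫ t in a..a + N * h, bernoulliKernel 1 a h t * g' t := by
  have hle : a ≤ a + N * h := le_add_of_nonneg_right (by positivity)
  have hleft (i : ℕ) : a ≤ a + i * h := le_add_of_nonneg_right (by positivity)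
  have hright {i : ℕ} (hi : i < N) : a + (i + 1) * h ≤ a + N * h := by
    have : (i : ℝ) + 1 ≤ N := by exact_mod_cast hi
    gcongr
  have hint {i : ℕ} (hi : i < N) :
      IntervalIntegrable g' volume (a + i * h) (a + (i + 1) * h) := by
    refine hg'.mono_set ?_
    rw [uIcc_of_le hle, uIcc_of_le (by gcongr; linarith)]
    exact Icc_subset_Icc (hleft i) (hright hi)
  have hadjacent := sum_integral_adjacent_intervals (a := fun i : ℕ => a + i * h) (n := N)
    fun i hi => by simpa using intervalIntegrable_bernoulliKernel_mul 1 a h (hint hi)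
  simp only [Nat.cast_add_one, Nat.cast_zero, zero_mul, add_zero] at hadjacent
  rw [← sum_trapezoidal_error_adjacent_intervals hN
    (ContinuousOn.intervalIntegrable (by rwa [uIcc_of_le hle])), ← hadjacent, Finset.mul_sum]
  refine Finset.sum_congr rfl fun i hi => ?_
  have hi := Finset.mem_range.1 hi
  exact trapezoidal_error_one_eq_integral_bernoulliKernel hh i
    (hg.mono (Icc_subset_Icc (hleft i) (hright hi)))
    (fun x hx => hderiv x (Ioo_subset_Ioo (hleft i) (hright hi) hx)) (hint hi)

lemma integral_bernoulliKernel_mul {m : ℕ} {g g' : ℝ → ℝ} (hm : m ≠ 0) (hh : 0 < h)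
    (hg : ContinuousOn g (Icc a (a + N * h)))
    (hderiv : ∀ x ∈ Ioo a (a + N * h), HasDerivAt g (g' x) x)
    (hg' : IntervalIntegrable g' volume a (a + N * h)) :
    ∫ t in a..a + N * h, bernoulliKernel m a h t * g t =
      h / (m + 1) * (bernoulli (m + 1) * (g (a + N * h) - g a) -
        ∫ t in a..a + N * h, bernoulliKernel (m + 1) a h t * g' t) := by
  have hle : a ≤ a + N * h := le_add_of_nonneg_right (by positivity)
  have hparts := integral_mul_deriv_eq_deriv_mul_of_hasDeriv_right
    (continuous_bernoulliKernel (by simpa using hm : m + 1 ≠ 1) a h).continuousOn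
    (by rwa [uIcc_of_le hle])
    (fun x _ => hasDerivWithinAt_Ioi_bernoulliKernel m a hh x)
    (fun x hx => (hderiv x (by rwa [min_eq_left hle, max_eq_right hle] at hx)).hasDerivWithinAt)
    (by simpa using (intervalIntegrable_bernoulliKernel_mul m a h
      (intervalIntegrable_const (c := (1 : ℝ)))).const_mul ((m + 1) / h)) hg'
  have hleft : bernoulliKernel (m + 1) a h a = bernoulli (m + 1) := by
    simpa using bernoulliKernel_node (m + 1) a hh.ne' 0
  simp only [hleft, bernoulliKernel_node _ a hh.ne', mul_assoc,
    intervalIntegral.integral_const_mul] at hparts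
  rw [hparts]
  field

theorem trapezoidal_error_euler_maclaurin {g : ℝ → ℝ} {n : ℕ} (hh : 0 < h) (hN : 0 < N)
    (hg : ContDiffOn ℝ (n + 1) g (Icc a (a + N * h))) :
    trapezoidal_error g N a (a + N * h) =
      ∑ m ∈ Finset.range n, (-1) ^ m * h ^ (m + 2) / (m + 2)! * bernoulli (m + 2) *
          (iteratedDerivWithin (m + 1) g (Icc a (a + N * h)) (a + N * h) -
            iteratedDerivWithin (m + 1) g (Icc a (a + N * h)) a) +
        (-1) ^ n * h ^ (n + 1) / (n + 1)! * ∫ t in a..a + N * h,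
          bernoulliKernel (n + 1) a h t *
            iteratedDerivWithin (n + 1) g (Icc a (a + N * h)) t := by
  have hlt : a < a + N * h := lt_add_of_pos_right a (by positivity)
  have hunique : UniqueDiffOn ℝ (Icc a (a + N * h)) := uniqueDiffOn_Icc hlt
  have hint {m : ℕ} (hgm : ContDiffOn ℝ m g (Icc a (a + N * h))) :
      IntervalIntegrable (iteratedDerivWithin m g (Icc a (a + N * h))) volume a (a + N * h) :=
    ContinuousOn.intervalIntegrable (by
      rw [uIcc_of_le hlt.le]
      exact hgm.continuousOn_iteratedDerivWithin le_rfl hunique)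
  induction n with
  | zero =>
    have hg1 : ContDiffOn ℝ (1 : ℕ) g (Icc a (a + N * h)) := by simpa using hg
    rw [trapezoidal_error_eq_integral_bernoulliKernel hh hN hg.continuousOn
      (fun x hx => ?_) (hint hg1)]
    · simp
    · simpa using hasDerivAt_iteratedDerivWithin hg1 one_pos hunique (Icc_mem_nhds hx.1 hx.2)
  | succ n ih =>
    have hg' : ContDiffOn ℝ (n + 2 : ℕ) g (Icc a (a + N * h)) := by exact_mod_cast hg
    have hlast := integral_bernoulliKernel_mul n.succ_ne_zero hh
      (hg'.continuousOn_iteratedDerivWithin (by exact_mod_cast Nat.le_succ _) hunique)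
      (fun x hx => hasDerivAt_iteratedDerivWithin hg' (by exact_mod_cast Nat.lt_succ_self _)
        hunique (Icc_mem_nhds hx.1 hx.2))
      (hint hg')
    rw [ih (hg.of_le (by exact_mod_cast Nat.le_succ _)), Finset.sum_range_succ, hlast,
      Nat.factorial_succ (n + 1)]
    push_cast
    field

lemma abs_trapezoidal_error_le_of_iteratedDerivWithin_eq {g : ℝ → ℝ} {n : ℕ} {B M : ℝ}
    (hh : 0 < h) (hN : 0 < N) (hg : ContDiffOn ℝ (n + 1) g (Icc a (a + N * h)))
    (hends : ∀ m < n, iteratedDerivWithin (m + 1) g (Icc a (a + N * h)) (a + N * h) =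
      iteratedDerivWithin (m + 1) g (Icc a (a + N * h)) a)
    (hB : ∀ t, |bernoulliKernel (n + 1) a h t| ≤ B)
    (hM : ∀ t ∈ Icc a (a + N * h), |iteratedDerivWithin (n + 1) g (Icc a (a + N * h)) t| ≤ M) :
    |trapezoidal_error g N a (a + N * h)| ≤
      h ^ (n + 1) / (n + 1)! * (B * M * (N * h)) := by
  have hle : a ≤ a + N * h := le_add_of_nonneg_right (by positivity)
  have hB0 : 0 ≤ B := (abs_nonneg _).trans (hB a)
  have hboundary : ∑ m ∈ Finset.range n, (-1) ^ m * h ^ (m + 2) / (m + 2)! * bernoulli (m + 2) *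
      (iteratedDerivWithin (m + 1) g (Icc a (a + N * h)) (a + N * h) -
        iteratedDerivWithin (m + 1) g (Icc a (a + N * h)) a) = 0 :=
    Finset.sum_eq_zero fun m hm => by rw [hends m (Finset.mem_range.1 hm), sub_self, mul_zero]
  have hremainder : |∫ t in a..a + N * h, bernoulliKernel (n + 1) a h t *
      iteratedDerivWithin (n + 1) g (Icc a (a + N * h)) t| ≤ B * M * (N * h) := by
    have hbound := norm_integral_le_of_norm_le_const (a := a) (b := a + N * h) (C := B * M)
      (f := fun t => bernoulliKernel (n + 1) a h t *
        iteratedDerivWithin (n + 1) g (Icc a (a + N * h)) t) fun t ht => by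
        rw [uIoc_of_le hle] at ht
        rw [norm_mul]
        exact mul_le_mul (hB t) (hM t (Ioc_subset_Icc_self ht)) (norm_nonneg _) hB0
    rwa [add_sub_cancel_left, abs_of_nonneg (by positivity : 0 ≤ N * h)] at hbound
  rw [trapezoidal_error_euler_maclaurin hh hN hg, hboundary, zero_add, abs_mul]
  have hcoeff : |(-1) ^ n * h ^ (n + 1) / (n + 1)!| = h ^ (n + 1) / (n + 1)! := by
    rw [abs_div, abs_mul, abs_neg_one_pow, one_mul, abs_of_pos (by positivity), Nat.abs_cast]
  rw [hcoeff]
  gcongr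

end Mesh

end EulerMaclaurin

section IteratedDerivWithin

open Set Pointwise

variable {𝕜 : Type*} [NontriviallyNormedField 𝕜] {s t : Set 𝕜} {x : 𝕜} {n : ℕ}

lemma iteratedDerivWithin_subset {F : Type*} [NormedAddCommGroup F] [NormedSpace 𝕜 F]
    {f : 𝕜 → F} (hst : s ⊆ t) (hs : UniqueDiffOn 𝕜 s) (ht : UniqueDiffOn 𝕜 t)
    (hf : ContDiffOn 𝕜 n f t) (hx : x ∈ s) :
    iteratedDerivWithin n f s x = iteratedDerivWithin n f t x := by
  simp only [iteratedDerivWithin, iteratedFDerivWithin_subset hst hs ht hf hx]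

lemma iteratedDerivWithin_mul_eq_zero_of_left {𝔸 : Type*} [NormedRing 𝔸] [NormedAlgebra 𝕜 𝔸]
    {f g : 𝕜 → 𝔸} (hx : x ∈ s) (hs : UniqueDiffOn 𝕜 s) (hf : ContDiffWithinAt 𝕜 n f s x)
    (hg : ContDiffWithinAt 𝕜 n g s x) (hzero : ∀ k ≤ n, iteratedDerivWithin k f s x = 0) :
    iteratedDerivWithin n (f * g) s x = 0 := by
  rw [iteratedDerivWithin_mul hx hs hf hg]
  refine Finset.sum_eq_zero fun k hk => ?_
  rw [hzero k (Finset.mem_range_succ_iff.1 hk), mul_zero, zero_mul]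

lemma iteratedDerivWithin_Icc_of_comp_add_sub_eq {F : Type*} [NormedAddCommGroup F]
    [NormedSpace ℝ F] {g : ℝ → F} {a b : ℝ} (m : ℕ) (hg : ∀ z, g (a + b - z) = g z) (z : ℝ) :
    iteratedDerivWithin m g (Icc a b) z =
      (-1 : ℝ) ^ m • iteratedDerivWithin m g (Icc a b) (a + b - z) := by
  have hset : (a + b) +ᵥ -Icc a b = Icc a b := by simp
  simpa only [hg, hset] using
    congrFun (iteratedDerivWithin_comp_const_sub (n := m) (f := g) (s := Icc a b) (a + b)) z

end IteratedDerivWithin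

lemma le_biSup_of_continuousOn {X α : Type*} [TopologicalSpace X]
    [ConditionallyCompleteLinearOrder α] [TopologicalSpace α] [ClosedIciTopology α] {s : Set X}
    {g : X → α} (hs : IsCompact s) (hg : ContinuousOn g s) {x : X} (hx : x ∈ s) :
    g x ≤ ⨆ y ∈ s, g y := by
  refine le_ciSup₂ (f := fun y (_ : y ∈ s) => g y) ((hs.bddAbove_image hg).mono ?_) x hx
  simp only [Set.iUnion_subset_iff, Set.range_subset_iff]
  exact fun y hy => Set.mem_image_of_mem g hy

section Convolution

open Set
open scoped Nat

variable {f : ℝ → ℝ}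

lemma contDiffOn_comp_const_sub_Icc {c : ℝ} {n : WithTop ℕ∞} (hf : ContDiffOn ℝ n f (Icc 0 c)) :
    ContDiffOn ℝ n (fun z => f (c - z)) (Icc 0 c) :=
  hf.comp (by fun_prop) fun z hz => by simpa using hz.symm

lemma contDiffOn_mul_comp_sub {c : ℝ} {n : WithTop ℕ∞} (hf : ContDiffOn ℝ n f (Icc 0 c)) :
    ContDiffOn ℝ n (fun z => f z * f (c - z)) (Icc 0 c) :=
  hf.mul (contDiffOn_comp_const_sub_Icc hf)

lemma iteratedDerivWithin_mul_comp_sub_left_eq_zero {c : ℝ} {n : ℕ} (hc : 0 < c)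
    (hf : ContDiffOn ℝ n f (Icc 0 c))
    (hzero : ∀ m ≤ n, iteratedDerivWithin m f (Icc 0 c) 0 = 0) :
    iteratedDerivWithin n (fun z => f z * f (c - z)) (Icc 0 c) 0 = 0 :=
  have hmem : (0 : ℝ) ∈ Icc 0 c := left_mem_Icc.2 hc.le
  iteratedDerivWithin_mul_eq_zero_of_left hmem (uniqueDiffOn_Icc hc) (hf 0 hmem)
    (contDiffOn_comp_const_sub_Icc hf 0 hmem) hzero

lemma dconv2_sub_conv2_eq_trapezoidal_error (hf : f 0 = 0) (h : ℝ) {k : ℕ} (hk : 0 < k) :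
    dconv2 f h k - conv2 f (k * h) =
      trapezoidal_error (fun z => f z * f (k * h - z)) k 0 (0 + k * h) := by
  have hsum : dconv2 f h k = h * ∑ j ∈ Finset.range (k + 1), f (j * h) * f (k * h - j * h) := by
    rw [dconv2]
    congr 1
    refine Finset.sum_congr rfl fun j hj => ?_
    rw [Nat.cast_sub (Finset.mem_range_succ_iff.1 hj), sub_mul]
  rw [trapezoidal_error, trapezoidal_integral_eq_mul_sum_sub _ hk, hsum, conv2]
  simp [hf]

lemma abs_dconv2_sub_conv2_le {h B : ℝ} {k n : ℕ} (hh : 0 < h) (hk : 0 < k)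
    (hf : ContDiffOn ℝ (n + 1) f (Icc 0 (k * h)))
    (hzero : ∀ m ≤ n, iteratedDerivWithin m f (Icc 0 (k * h)) 0 = 0)
    (hB : ∀ t, |bernoulliKernel (n + 1) 0 h t| ≤ B) :
    |dconv2 f h k - conv2 f (k * h)| ≤
      h ^ (n + 1) / (n + 1)! * (B * (⨆ y ∈ Icc 0 (k * h),
        |iteratedDerivWithin (n + 1) (fun z => f z * f (k * h - z)) (Icc 0 (k * h)) y|) *
          (k * h)) := by
  have hc : 0 < k * h := by positivity
  rw [dconv2_sub_conv2_eq_trapezoidal_error (by simpa using hzero 0 n.zero_le) h hk]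
  refine abs_trapezoidal_error_le_of_iteratedDerivWithin_eq hh hk
    (by rw [zero_add]; exact contDiffOn_mul_comp_sub hf) (fun m hm => ?_) hB fun t ht => ?_
  · have hf' : ContDiffOn ℝ (m + 1 : ℕ) f (Icc 0 (k * h)) :=
      hf.of_le (by exact_mod_cast Nat.succ_le_succ hm.le)
    have hleft := iteratedDerivWithin_mul_comp_sub_left_eq_zero hc hf'
      fun j hj => hzero j (hj.trans hm)
    rw [zero_add, iteratedDerivWithin_Icc_of_comp_add_sub_eq (m + 1)
      (fun z => by rw [zero_add, sub_sub_cancel, mul_comm]), zero_add, sub_self, hleft, smul_zero]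
  · rw [zero_add] at ht ⊢
    have hcont := (contDiffOn_mul_comp_sub hf).continuousOn_iteratedDerivWithin
      (m := n + 1) (by exact_mod_cast le_rfl) (uniqueDiffOn_Icc hc)
    exact le_biSup_of_continuousOn isCompact_Icc hcont.abs ht

theorem dconv2_error_general (n : ℕ) (hn : 1 ≤ n) (γ : ℝ) (hγ : 0 < γ) :
    ∃ C₁ : ℝ, 0 < C₁ ∧
      ∀ f : ℝ → ℝ,
        ContDiffOn ℝ n f (Icc 0 γ) →
        (∀ k < n, iteratedDerivWithin k f (Icc 0 γ) 0 = 0) →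
        ∀ N : ℕ, 1 ≤ N →
          ∀ k ≤ N,
            |dconv2 f (γ / N) k - conv2 f (k * (γ / N))| ≤
              C₁ *
                (⨆ y ∈ Icc (0 : ℝ) (k * (γ / N)),
                  |iteratedDerivWithin n (fun z => f z * f (k * (γ / N) - z))
                    (Icc (0 : ℝ) (k * (γ / N))) y|) *
                ((N : ℝ) ^ n)⁻¹ := by
  obtain ⟨n, rfl⟩ := Nat.exists_eq_add_of_le' hn
  obtain ⟨B, hBpos, hB⟩ := exists_abs_bernoulliKernel_le (n + 1)
  refine ⟨B * γ ^ (n + 2) / (n + 1)!, by positivity, fun f hf hzero N hN k hkN => ?_⟩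
  set M := ⨆ y ∈ Icc (0 : ℝ) (k * (γ / N)), |iteratedDerivWithin (n + 1)
    (fun z => f z * f (k * (γ / N) - z)) (Icc (0 : ℝ) (k * (γ / N))) y|
  have hM : 0 ≤ M := Real.iSup_nonneg fun y => Real.iSup_nonneg fun _ => abs_nonneg _
  have : (0 : ℝ) < N := by exact_mod_cast hN
  have hkγ : k * (γ / N) ≤ γ := by
    calc k * (γ / N) ≤ N * (γ / N) := by gcongr
      _ = γ := by field
  have hsub : Icc 0 (k * (γ / N)) ⊆ Icc 0 γ := Icc_subset_Icc_right hkγ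
  rcases k.eq_zero_or_pos with rfl | hk
  · have hf0 : f 0 = 0 := by simpa using hzero 0 n.succ_pos
    have : dconv2 f (γ / N) 0 - conv2 f ((0 : ℕ) * (γ / N)) = 0 := by simp [dconv2, conv2, hf0]
    rw [this, abs_zero]
    positivity
  have hc : 0 < k * (γ / N) := by positivity
  have hzero' : ∀ m ≤ n, iteratedDerivWithin m f (Icc 0 (k * (γ / N))) 0 = 0 := fun m hm => by
    rw [iteratedDerivWithin_subset hsub (uniqueDiffOn_Icc hc) (uniqueDiffOn_Icc hγ)
      (hf.of_le (by exact_mod_cast hm.trans n.le_succ)) (left_mem_Icc.2 hc.le)]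
    exact hzero m (Nat.lt_succ_of_le hm)
  calc |dconv2 f (γ / N) k - conv2 f (k * (γ / N))|
      ≤ (γ / N) ^ (n + 1) / (n + 1)! * (B * M * (k * (γ / N))) :=
        abs_dconv2_sub_conv2_le (by positivity) hk
          (by exact_mod_cast hf.mono hsub) hzero' (hB 0 (γ / N))
    _ ≤ (γ / N) ^ (n + 1) / (n + 1)! * (B * M * γ) := by gcongr
    _ = B * γ ^ (n + 2) / (n + 1)! * M * ((N : ℝ) ^ (n + 1))⁻¹ := by
        rw [div_pow]
        field

end Convolution

/-- Trapezoidal-rule error bound for the discrete self-convolution: there exists a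
constant `C₁ > 0`, depending only on `p` and `γ`, such that for every nonnegative
`f ∈ C₀^{2p}([0,γ])`, every `N ≥ 1` (with `h = γ/N`, `x_j = j·h`) and every `k ≤ N`,
`|f̄^{⊛2}(x_k) − f^{*2}(x_k)|
  ≤ C₁ · max_{0≤y≤x_k} |d^{2p}/dy^{2p}( f(y)·f(x_k−y) )| · N^{−2p}`. -/
theorem dconv2_error
    (p : ℕ) (hp : 1 ≤ p) (γ : ℝ) (hγ : 0 < γ) :
    ∃ C₁ : ℝ, 0 < C₁ ∧
      ∀ f : ℝ → ℝ,
        ContDiffOn ℝ (2 * p) f (Set.Icc 0 γ) →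
        (∀ x ∈ Set.Icc (0:ℝ) γ, 0 ≤ f x) →
        (∀ k < 2 * p, iteratedDerivWithin k f (Set.Icc 0 γ) 0 = 0) →
        ∀ N : ℕ, 1 ≤ N →
          ∀ k ≤ N,
            |dconv2 f (γ / N) k - conv2 f (k * (γ / N))|
              ≤ C₁
                  * (⨆ y ∈ Set.Icc (0:ℝ) (k * (γ / N)),
                      |iteratedDerivWithin (2 * p)
                          (fun z => f z * f (k * (γ / N) - z))
                          (Set.Icc (0:ℝ) (k * (γ / N))) y|)
                  * ((N : ℝ) ^ (2 * p))⁻¹ := by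
  obtain ⟨C, hC, hbound⟩ := dconv2_error_general (2 * p) (by lia) γ hγ
  exact ⟨C, hC, fun f hf _ => hbound f (by exact_mod_cast hf)⟩
end

section
/- Let p ≥ 1 be an integer, γ > 0, f ∈ C₀^{2p}([0,γ]) with f ≥ 0, let N ≥ 1 be an integer, h = γ/N, and x_j = j·h. Then for every integer n̄ ≥ 2 and all indices 0 ≤ j ≤ k ≤ N, one has f(x_{k−j}) · C₂(n̄, x_j) ≤ C₂(n̄+1, x_k), where C₂ is the constant mapping defined from f and p. -/
/-!
Regard `C₂(n, x_k)` as the largest weight of an index tuple `(j₁, …, j_{m-1})` of sum `k`. Appending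
the entry `k - j` to a tuple of sum `j` gives a tuple of sum `k`, multiplies the weight by
`f(x_{k-j})`, and raises `m` by one. Since raising `n` and `m` together leaves the convolution order
`n + 1 - m` unchanged, the first factor is the same on both sides, and every value competing for
`f(x_{k-j}) · C₂(n, x_j)` also competes for `C₂(n + 1, x_k)`.
-/

section FiniteMaximum

theorem le_ciSup_of_mem_finset {ι α : Type*} [ConditionallyCompleteLattice α] {s : Finset ι}
    (g : ι → α) {i : ι} (hi : i ∈ s) : g i ≤ ⨆ i ∈ s, g i := by
  have : Nonempty α := ⟨g i⟩
  have bdd : BddAbove (⋃ i, Set.range fun _ : i ∈ s => g i) := by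
    refine (s.finite_toSet.image g).bddAbove.mono (Set.iUnion_subset fun i => ?_)
    exact Set.range_subset_iff.2 fun hi => Set.mem_image_of_mem g hi
  exact le_ciSup₂ bdd i hi

theorem mul_iSup₂_le {ι : Sort*} {κ : ι → Sort*} {g : ∀ i, κ i → ℝ} {b c : ℝ} (hc : 0 ≤ c)
    (hb : 0 ≤ b) (h : ∀ i j, c * g i j ≤ b) : c * ⨆ (i) (j), g i j ≤ b := by
  simp only [Real.mul_iSup_of_nonneg hc]
  exact Real.iSup_le (fun i => Real.iSup_le (h i) hb) hb

end FiniteMaximum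

section Tuple

open Finset.Nat (antidiagonalTuple mem_antidiagonalTuple)

theorem le_of_mem_antidiagonalTuple {m k : ℕ} {t : Fin m → ℕ} (ht : t ∈ antidiagonalTuple m k)
    (i : Fin m) : t i ≤ k :=
  mem_antidiagonalTuple.1 ht ▸ Finset.single_le_sum_of_canonicallyOrdered (Finset.mem_univ i)

theorem snoc_mem_antidiagonalTuple {m j k : ℕ} {t : Fin m → ℕ} (ht : t ∈ antidiagonalTuple m j)
    (hjk : j ≤ k) : (Fin.snoc t (k - j) : Fin (m + 1) → ℕ) ∈ antidiagonalTuple (m + 1) k := by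
  rw [mem_antidiagonalTuple] at ht ⊢
  rw [Fin.sum_snoc, ht, Nat.add_sub_cancel' hjk]

/-- The weight `a(j₁) · ∏_{ℓ ≥ 2} w(j_ℓ)` of a tuple `(j₁, j₂, …)`, which is the quantity maximized
in `C₂`. The first entry sits at index `0`. -/
def tupleWeight {ι R : Type*} [CommMonoid R] (a w : ι → R) {m : ℕ} (t : Fin (m + 1) → ι) : R :=
  a (t 0) * ∏ i : Fin m, w (t i.succ)

theorem tupleWeight_snoc {ι R : Type*} [CommMonoid R] (a w : ι → R) {m : ℕ} (t : Fin (m + 1) → ι)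
    (j : ι) : tupleWeight a w (Fin.snoc t j : Fin (m + 2) → ι) = tupleWeight a w t * w j := by
  have snoc_zero : (Fin.snoc t j : Fin (m + 2) → ι) 0 = t 0 :=
    Fin.snoc_castSucc (α := fun _ => ι) j t 0
  simp only [tupleWeight, snoc_zero, Fin.prod_univ_castSucc, Fin.succ_castSucc, Fin.succ_last,
    Fin.snoc_castSucc, Fin.snoc_last, mul_assoc]

theorem tupleWeight_nonneg {ι R : Type*} [CommSemiring R] [PartialOrder R] [IsOrderedRing R]
    {a w : ι → R} {m : ℕ} {t : Fin (m + 1) → ι} (ha : 0 ≤ a (t 0))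
    (hw : ∀ i : Fin m, 0 ≤ w (t i.succ)) : 0 ≤ tupleWeight a w t :=
  mul_nonneg ha (Finset.prod_nonneg fun i _ => hw i)

/-- The largest weight of a tuple of sum `k` with at most `n` entries, where the first entry of a
tuple with `m + 1` entries is weighted by `a (n - m)`. This is the combinatorial form of `C₂`, with
`n` in place of `n - 1`. -/
noncomputable def maxTupleWeight (a : ℕ → ℕ → ℝ) (w : ℕ → ℝ) (n k : ℕ) : ℝ :=
  ⨆ m ∈ Finset.range n, ⨆ t ∈ antidiagonalTuple (m + 1) k, tupleWeight (a (n - m)) w t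

variable {a : ℕ → ℕ → ℝ} {w : ℕ → ℝ} {n m j k : ℕ}

theorem tupleWeight_le_maxTupleWeight {t : Fin (m + 1) → ℕ} (hm : m < n)
    (ht : t ∈ antidiagonalTuple (m + 1) k) :
    tupleWeight (a (n - m)) w t ≤ maxTupleWeight a w n k :=
  (le_ciSup_of_mem_finset (tupleWeight (a (n - m)) w) ht).trans
    (le_ciSup_of_mem_finset
      (fun m => ⨆ t ∈ antidiagonalTuple (m + 1) k, tupleWeight (a (n - m)) w t)
      (Finset.mem_range.2 hm))

theorem maxTupleWeight_nonneg (ha : ∀ r i, 0 ≤ a r i) (hw : ∀ i ≤ k, 0 ≤ w i) :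
    0 ≤ maxTupleWeight a w n k :=
  Real.iSup_nonneg fun _ => Real.iSup_nonneg fun _ => Real.iSup_nonneg fun _ =>
    Real.iSup_nonneg fun ht => tupleWeight_nonneg (ha _ _) fun i =>
      hw _ (le_of_mem_antidiagonalTuple ht i.succ)

theorem mul_maxTupleWeight_le_succ (ha : ∀ r i, 0 ≤ a r i) (hw : ∀ i ≤ k, 0 ≤ w i)
    (hjk : j ≤ k) : w (k - j) * maxTupleWeight a w n j ≤ maxTupleWeight a w (n + 1) k := by
  have hc : 0 ≤ w (k - j) := hw _ (Nat.sub_le k j)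
  have hmax : 0 ≤ maxTupleWeight a w (n + 1) k := maxTupleWeight_nonneg ha hw
  refine mul_iSup₂_le hc hmax fun m hm => mul_iSup₂_le hc hmax fun t ht => ?_
  calc w (k - j) * tupleWeight (a (n - m)) w t
      = tupleWeight (a (n + 1 - (m + 1))) w (Fin.snoc t (k - j) : Fin (m + 2) → ℕ) := by
        rw [tupleWeight_snoc, mul_comm, Nat.add_sub_add_right]
    _ ≤ maxTupleWeight a w (n + 1) k :=
        tupleWeight_le_maxTupleWeight (Nat.succ_lt_succ (Finset.mem_range.1 hm))
          (snoc_mem_antidiagonalTuple ht hjk)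

end Tuple

section ConvolutionConstant

variable {p : ℕ} {f : ℝ → ℝ} {h : ℝ} {n j k : ℕ}

/-- The factor `max_{0≤y≤x_j} |d^{2p}/dy^{2p}( f^{*r}(y)·f(x_j−y) )|` of `C₂`, where `x_j = j·h`. -/
noncomputable def convDerivMax (p : ℕ) (f : ℝ → ℝ) (h : ℝ) (r j : ℕ) : ℝ :=
  ⨆ y ∈ Set.Icc (0 : ℝ) (j * h),
    |iteratedDerivWithin (2 * p) (fun z => iterConv f r z * f (j * h - z))
      (Set.Icc (0 : ℝ) (j * h)) y|

theorem convDerivMax_nonneg (r j : ℕ) : 0 ≤ convDerivMax p f h r j :=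
  Real.iSup_nonneg fun _ => Real.iSup_nonneg fun _ => abs_nonneg _

theorem C2_eq_maxTupleWeight :
    C2 p f h n k = maxTupleWeight (convDerivMax p f h) (fun i => f (i * h)) (n - 1) k := by
  simp [C2, maxTupleWeight, tupleWeight, convDerivMax, Finset.prod_filter, Fin.prod_univ_succ]

theorem C2_mul_le_C2_succ_general (hf : ∀ i ≤ k, 0 ≤ f (i * h)) (hn : 2 ≤ n) (hjk : j ≤ k) :
    f ((k - j : ℕ) * h) * C2 p f h n j ≤ C2 p f h (n + 1) k := by
  obtain ⟨r, rfl⟩ := Nat.exists_eq_add_of_le' (one_le_two.trans hn)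
  simpa only [C2_eq_maxTupleWeight, Nat.add_sub_cancel] using
    mul_maxTupleWeight_le_succ (n := r) convDerivMax_nonneg hf hjk

end ConvolutionConstant

theorem natCast_mul_div_mem_Icc {𝕜 : Type*} [Field 𝕜] [LinearOrder 𝕜] [IsStrictOrderedRing 𝕜]
    {γ : 𝕜} (hγ : 0 ≤ γ) {i N : ℕ} (hi : i ≤ N) : (i : 𝕜) * (γ / N) ∈ Set.Icc 0 γ := by
  refine ⟨by positivity, ?_⟩
  rw [mul_div_left_comm]
  exact mul_le_of_le_one_right hγ (div_le_one_of_le₀ (Nat.cast_le.2 hi) N.cast_nonneg)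

/-- Monotonicity of the constant mapping `C₂`:
for all `n̄ ≥ 2` and indices `0 ≤ j ≤ k ≤ N`,
`f(x_{k−j}) · C₂(n̄, x_j) ≤ C₂(n̄+1, x_k)`. -/
theorem C2_mul_le_C2_succ
    (p : ℕ) (hp : 1 ≤ p) (γ : ℝ) (hγ : 0 < γ) (f : ℝ → ℝ)
    (hf_smooth : ContDiffOn ℝ (2 * p) f (Set.Icc 0 γ))
    (hf_nonneg : ∀ x ∈ Set.Icc (0:ℝ) γ, 0 ≤ f x)
    (hf_zero : ∀ k < 2 * p, iteratedDerivWithin k f (Set.Icc 0 γ) 0 = 0)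
    (N : ℕ) (hN : 1 ≤ N) :
    ∀ n : ℕ, 2 ≤ n →
      ∀ j k : ℕ, j ≤ k → k ≤ N →
        f (((k - j : ℕ) : ℝ) * (γ / N)) * C2 p f (γ / N) n j
          ≤ C2 p f (γ / N) (n + 1) k := by
  exact fun n hn j k hjk hkN => C2_mul_le_C2_succ_general
    (fun i hi => hf_nonneg _ (natCast_mul_div_mem_Icc hγ.le (hi.trans hkN))) hn hjk
end

section
/- Let ε > 0 and let fl : ℝ → ℝ satisfy |fl(z) − z| ≤ ε|z| for all z ∈ ℝ. Let k ≥ 1, let t_0, t_1, …, t_k ≥ 0 be nonnegative real numbers with S_k = Σ_{j=0}^k t_j, let c_t > 0 and let t̂_0, …, t̂_k ∈ ℝ satisfy |t̂_j − t_j| ≤ t_j·c_t·ε for all j. Define the computed partial sums ŝ_0 = t̂_0 and ŝ_m = fl( ŝ_{m−1} + t̂_m ) for m = 1,…,k. If (k + c_t)·ε < 1, then |ŝ_k − S_k| ≤ S_k·( k + c_t )·ε·( 1 + k·ε ). -/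
/-!
An approximation within relative error `ε` of an approximation within relative error `ρ - 1` is
within relative error `ρ * (1 + ε) - 1`, errors being measured against the sum of the norms of the
terms. Hence `k` rounded additions of terms of relative error `δ` produce the factor
`(1 + ε) ^ k * (1 + δ) - 1`, which is at most `exp x * (1 + y) - 1` for `x = k * ε` and `y = δ`.
The Padé bound `exp x ≤ (2 + x) / (2 - x) = 1 + x + x ^ 2 / (2 - x)` turns `x + y ≤ 1`, that is
`1 + y ≤ 2 - x`, into `exp x * (1 + y) - 1 ≤ (x + y) * (1 + x)`.
-/

section RecursiveSummation

variable {E : Type*} [SeminormedAddCommGroup E]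

theorem norm_sub_le_of_relative_error {x y z : E} {A ε ρ : ℝ} (hε : 0 ≤ ε)
    (hxy : ‖x - y‖ ≤ ε * ‖y‖) (hyz : ‖y - z‖ ≤ A * (ρ - 1)) (hz : ‖z‖ ≤ A) :
    ‖x - z‖ ≤ A * (ρ * (1 + ε) - 1) := by
  have hy : ‖y‖ ≤ A * ρ := by linarith [norm_le_norm_add_norm_sub' y z]
  calc ‖x - z‖ ≤ ‖x - y‖ + ‖y - z‖ := norm_sub_le_norm_sub_add_norm_sub x y z
    _ ≤ ε * (A * ρ) + A * (ρ - 1) := by grw [hxy, hy, hyz]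
    _ = A * (ρ * (1 + ε) - 1) := by ring

theorem norm_recursive_sum_sub_sum_le {ε δ : ℝ} (hε : 0 ≤ ε) (hδ : 0 ≤ δ) {k : ℕ}
    {t t' s' : ℕ → E} (ht' : ∀ j ≤ k, ‖t' j - t j‖ ≤ δ * ‖t j‖) (hs'_zero : s' 0 = t' 0)
    (hs'_succ : ∀ m < k, ‖s' (m + 1) - (s' m + t' (m + 1))‖ ≤ ε * ‖s' m + t' (m + 1)‖) :
    ‖s' k - ∑ j ∈ Finset.range (k + 1), t j‖
      ≤ (∑ j ∈ Finset.range (k + 1), ‖t j‖) * ((1 + ε) ^ k * (1 + δ) - 1) := by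
  induction k with
  | zero => simpa [hs'_zero, mul_comm] using ht' 0 le_rfl
  | succ k ih =>
    have ih := ih (fun j hj => ht' j (by lia)) (fun m hm => hs'_succ m (by lia))
    set ρ : ℝ := (1 + ε) ^ k * (1 + δ) with hρ
    have hδρ : δ ≤ ρ - 1 := by
      have : 1 + δ ≤ ρ := le_mul_of_one_le_left (by linarith) (one_le_pow₀ (by linarith))
      linarith
    have hadd : ‖s' k + t' (k + 1) - ∑ j ∈ Finset.range (k + 2), t j‖
        ≤ (∑ j ∈ Finset.range (k + 2), ‖t j‖) * (ρ - 1) := by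
      rw [Finset.sum_range_succ, Finset.sum_range_succ _ (k + 1), add_sub_add_comm]
      calc _ ≤ ‖s' k - ∑ j ∈ Finset.range (k + 1), t j‖ + ‖t' (k + 1) - t (k + 1)‖ :=
            norm_add_le _ _
        _ ≤ (∑ j ∈ Finset.range (k + 1), ‖t j‖) * (ρ - 1) + (ρ - 1) * ‖t (k + 1)‖ := by
          grw [ih, ht' (k + 1) le_rfl, hδρ]
        _ = _ := by ring
    have hround := norm_sub_le_of_relative_error hε (hs'_succ k k.lt_succ_self) hadd
      (norm_sum_le _ _)
    rwa [hρ, mul_right_comm, ← pow_succ] at hround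

end RecursiveSummation

theorem one_add_pow_le_exp_nat_mul {x : ℝ} (hx : -1 ≤ x) (n : ℕ) :
    (1 + x) ^ n ≤ Real.exp (n * x) := by
  rw [Real.exp_nat_mul, add_comm]
  exact pow_le_pow_left₀ (by linarith) (Real.add_one_le_exp x) n

theorem exp_le_two_add_div_two_sub {x : ℝ} (hx₀ : 0 ≤ x) (hx₂ : x < 2) :
    Real.exp x ≤ (2 + x) / (2 - x) := by
  have hden : 0 < 2 - x := sub_pos.mpr hx₂
  -- The substitution `u = 2 * x / (2 - x)` inverts `x = 2 * u / (u + 2)`.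
  have hlog := Real.le_log_one_add_of_nonneg (x := 2 * x / (2 - x)) (by positivity)
  have hx : 2 * (2 * x / (2 - x)) / (2 * x / (2 - x) + 2) = x := by field_simp; ring
  have hu : 1 + 2 * x / (2 - x) = (2 + x) / (2 - x) := by field_simp; ring
  rw [hx, hu] at hlog
  exact (Real.le_log_iff_exp_le (by positivity)).mp hlog

theorem exp_mul_one_add_sub_one_le {x y : ℝ} (hx : 0 ≤ x) (hy : 0 ≤ y) (hxy : x + y ≤ 1) :
    Real.exp x * (1 + y) - 1 ≤ (x + y) * (1 + x) := by
  have hden : 0 < 2 - x := by linarith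
  have hquot : (1 + y) / (2 - x) ≤ 1 := (div_le_one hden).mpr (by linarith)
  calc Real.exp x * (1 + y) - 1 ≤ (2 + x) / (2 - x) * (1 + y) - 1 := by
        grw [exp_le_two_add_div_two_sub hx (by linarith)]
    _ = x + y + x * y + x ^ 2 * ((1 + y) / (2 - x)) := by field_simp; ring
    _ ≤ x + y + x * y + x ^ 2 * 1 := by gcongr
    _ = (x + y) * (1 + x) := by ring

theorem accumulated_sum_rounding_error_general {E : Type*} [SeminormedAddCommGroup E]
    {ε : ℝ} (hε : 0 ≤ ε) {fl : E → E} (hfl : ∀ z, ‖fl z - z‖ ≤ ε * ‖z‖) {k : ℕ} {t : ℕ → E}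
    {ct : ℝ} (hct : 0 ≤ ct) {that : ℕ → E} (hthat : ∀ j ≤ k, ‖that j - t j‖ ≤ ‖t j‖ * ct * ε)
    {shat : ℕ → E} (hshat0 : shat 0 = that 0)
    (hshat : ∀ m, 1 ≤ m → m ≤ k → shat m = fl (shat (m - 1) + that m))
    (hcond : (k + ct) * ε ≤ 1) :
    ‖shat k - ∑ j ∈ Finset.range (k + 1), t j‖
      ≤ (∑ j ∈ Finset.range (k + 1), ‖t j‖) * (k + ct) * ε * (1 + k * ε) := by
  have hct_eps : 0 ≤ ct * ε := by positivity
  have hterm : ∀ j ≤ k, ‖that j - t j‖ ≤ ct * ε * ‖t j‖ := fun j hj =>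
    (hthat j hj).trans_eq (by ring)
  have hstep : ∀ m < k, ‖shat (m + 1) - (shat m + that (m + 1))‖ ≤ ε * ‖shat m + that (m + 1)‖ :=
    fun m hm => hshat (m + 1) (by lia) hm ▸ hfl (shat m + that (m + 1))
  calc ‖shat k - ∑ j ∈ Finset.range (k + 1), t j‖
      ≤ (∑ j ∈ Finset.range (k + 1), ‖t j‖) * ((1 + ε) ^ k * (1 + ct * ε) - 1) :=
        norm_recursive_sum_sub_sum_le hε hct_eps hterm hshat0 hstep
    _ ≤ (∑ j ∈ Finset.range (k + 1), ‖t j‖) * (Real.exp (k * ε) * (1 + ct * ε) - 1) := by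
        grw [one_add_pow_le_exp_nat_mul (by linarith) k]
    _ ≤ (∑ j ∈ Finset.range (k + 1), ‖t j‖) * ((k * ε + ct * ε) * (1 + k * ε)) := by
        grw [exp_mul_one_add_sub_one_le (by positivity) hct_eps (by linarith)]
    _ = _ := by ring

/-- Rounding-error propagation for a recursively accumulated sum of `k+1`
already-approximated nonnegative terms, in a floating-point model `fl` with machine
epsilon `ε` (`|fl(z) − z| ≤ ε|z|` for all `z`): if `(k + c_t)·ε < 1` then
`|shat_k − S_k| ≤ S_k·(k + c_t)·ε·(1 + k·ε)`. -/
theorem accumulated_sum_rounding_error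
    (ε : ℝ) (hε : 0 < ε) (fl : ℝ → ℝ) (hfl : ∀ z : ℝ, |fl z - z| ≤ ε * |z|)
    (k : ℕ) (hk : 1 ≤ k)
    (t : ℕ → ℝ) (ht : ∀ j ≤ k, 0 ≤ t j)
    (ct : ℝ) (hct : 0 < ct)
    (that : ℕ → ℝ) (hthat : ∀ j ≤ k, |that j - t j| ≤ t j * ct * ε)
    (shat : ℕ → ℝ) (hshat0 : shat 0 = that 0)
    (hshat : ∀ m : ℕ, 1 ≤ m → m ≤ k → shat m = fl (shat (m - 1) + that m))
    (hcond : ((k : ℝ) + ct) * ε < 1) :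
    |shat k - ∑ j ∈ Finset.range (k + 1), t j|
      ≤ (∑ j ∈ Finset.range (k + 1), t j) * ((k : ℝ) + ct) * ε * (1 + k * ε) := by
  have hnorm : ∀ j ≤ k, ‖t j‖ = t j := fun j hj => Real.norm_of_nonneg (ht j hj)
  have hsum : ∑ j ∈ Finset.range (k + 1), ‖t j‖ = ∑ j ∈ Finset.range (k + 1), t j :=
    Finset.sum_congr rfl fun j hj => hnorm j (Finset.mem_range_succ_iff.mp hj)
  exact hsum ▸ accumulated_sum_rounding_error_general hε.le hfl hct.le
    (fun j hj => (hthat j hj).trans_eq (by rw [hnorm j hj])) hshat0 hshat hcond.le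
end
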